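/- arXiv:2507.00252 — 5 statements merged into one kernel-verified Lean document; each statement's English description precedes it below -/
import Mathlib

section
/- For all integers d ≥ 1 and t ≥ 1 there exists a constant C_d > 0 such that for all n ≥ 2, if G is the intersection graph of n nonempty axis-aligned boxes in ℝ^d and G contains no K_{t,t} subgraph, then G has at most C_d · t · n · (log₂ n)^d edges. -/
/-!
In one dimension, two intervals meet iff one of them contains the left endpoint of the other.  After
replacing left endpoints by their ranks, "a point lies in an interval" is decided by dyadic blocks:
a point lies in exactly one block of each level, while an interval `[p, q)` is the union of the
leftmost and the rightmost blocks that it contains at each level.  So the meeting relation of `n`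
intervals is a union of bicliques with every interval in only `O(log n)` of them.  For boxes,
intersecting bicliques coordinate by coordinate gives a union of bicliques with every box in
`O((log n)^d)` of them.

In a `K_{s,t}`-free graph, the sides `X` and `Y` of such a biclique cannot both be large, so
`|X| |Y| ≤ (s + t) (|X| + |Y|)`.  Summing over the bicliques bounds the number of edges.
-/

/-- A biclique cover of a simple graph `G`: a finite family of pairs of disjoint
vertex sets `(A i, B i)` such that every pair in `A i × B i` is an edge of `G`,
and every edge of `G` is covered by at least one biclique. -/
def IsBicliqueCover {V : Type*} (G : SimpleGraph V) {m : ℕ}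
    (A B : Fin m → Finset V) : Prop :=
  (∀ i, Disjoint (A i) (B i)) ∧
  (∀ i, ∀ a ∈ A i, ∀ b ∈ B i, G.Adj a b) ∧
  (∀ u v, G.Adj u v → ∃ i, (u ∈ A i ∧ v ∈ B i) ∨ (v ∈ A i ∧ u ∈ B i))

/-- A biclique partition: a biclique cover in which every edge is covered by
exactly one biclique. -/
def IsBicliquePartition {V : Type*} (G : SimpleGraph V) {m : ℕ}
    (A B : Fin m → Finset V) : Prop :=
  (∀ i, Disjoint (A i) (B i)) ∧
  (∀ i, ∀ a ∈ A i, ∀ b ∈ B i, G.Adj a b) ∧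
  (∀ u v, G.Adj u v → ∃! i, (u ∈ A i ∧ v ∈ B i) ∨ (v ∈ A i ∧ u ∈ B i))

/-- The size of a biclique cover: the sum of `|A i| + |B i|`. -/
def coverSize {V : Type*} {m : ℕ} (A B : Fin m → Finset V) : ℕ :=
  ∑ i, ((A i).card + (B i).card)

open scoped Finset

section Dyadic

variable {L j a p q x : ℕ}

/-- The dyadic block of level `j` and index `a`, the interval `[a 2^j, (a + 1) 2^j)`. -/
def dyadicBlock (j a : ℕ) : Finset ℕ :=
  Finset.Ico (a * 2 ^ j) ((a + 1) * 2 ^ j)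

lemma mem_dyadicBlock : x ∈ dyadicBlock j a ↔ x / 2 ^ j = a := by
  have hpos : 0 < 2 ^ j := by positivity
  rw [dyadicBlock, Finset.mem_Ico, Nat.div_eq_iff hpos, add_one_mul]
  omega

lemma dyadicBlock_subset_Ico_iff :
    dyadicBlock j a ⊆ Finset.Ico p q ↔ p ≤ a * 2 ^ j ∧ (a + 1) * 2 ^ j ≤ q :=
  Finset.Ico_subset_Ico_iff (by gcongr; exact a.lt_succ_self)

/-- The dyadic blocks, encoded as pairs (level, index), that represent the interval `[p, q)`: for
each level below `L`, the leftmost and the rightmost block contained in `[p, q)`.  The filter is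
needed since `[p, q)` may contain no block of a given level. -/
def dyadicCover (L p q : ℕ) : Finset (ℕ × ℕ) :=
  {b ∈ (Finset.range L).biUnion fun j => {(j, p ⌈/⌉ 2 ^ j), (j, q / 2 ^ j - 1)} |
    dyadicBlock b.1 b.2 ⊆ Finset.Ico p q}

lemma mem_dyadicCover : (j, a) ∈ dyadicCover L p q ↔
    (j < L ∧ (a = p ⌈/⌉ 2 ^ j ∨ a = q / 2 ^ j - 1)) ∧ dyadicBlock j a ⊆ Finset.Ico p q := by
  simp only [dyadicCover, Finset.mem_filter, Finset.mem_biUnion, Finset.mem_range]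
  grind

lemma card_dyadicCover_le (L p q : ℕ) : #(dyadicCover L p q) ≤ 2 * L :=
  calc #(dyadicCover L p q)
      ≤ #((Finset.range L).biUnion fun j => {(j, p ⌈/⌉ 2 ^ j), (j, q / 2 ^ j - 1)}) :=
        Finset.card_filter_le _ _
    _ ≤ #(Finset.range L) * 2 := Finset.card_biUnion_le_card_mul _ _ _ fun _ _ => Finset.card_le_two
    _ = 2 * L := by rw [Finset.card_range, mul_comm]

lemma eq_ceilDiv_or_eq_div_sub_one_of_dyadicBlock_subset
    (hblock : dyadicBlock j a ⊆ Finset.Ico p q)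
    (hparent : ¬ dyadicBlock (j + 1) (a / 2) ⊆ Finset.Ico p q) :
    a = p ⌈/⌉ 2 ^ j ∨ a = q / 2 ^ j - 1 := by
  have hpos : 0 < 2 ^ j := by positivity
  rw [dyadicBlock_subset_Ico_iff] at hblock hparent
  by_contra! hne
  -- Otherwise both neighbours of the block lie in `[p, q)`, and one of them is its sibling.
  have hleft : p ≤ 2 ^ j * (a - 1) := by
    have : p ⌈/⌉ 2 ^ j ≤ a := (ceilDiv_le_iff_le_mul hpos).2 (by linarith [hblock.1])
    exact (ceilDiv_le_iff_le_mul hpos).1 (by omega)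
  have hright : (a + 2) * 2 ^ j ≤ q := by
    have : a + 1 ≤ q / 2 ^ j := (Nat.le_div_iff_mul_le hpos).2 hblock.2
    exact (Nat.le_div_iff_mul_le hpos).1 (by omega)
  refine hparent ⟨?_, ?_⟩
  · calc p ≤ 2 ^ j * (a - 1) := hleft
      _ ≤ 2 ^ j * (a / 2 * 2) := by gcongr; omega
      _ = a / 2 * 2 ^ (j + 1) := by ring
  · calc (a / 2 + 1) * 2 ^ (j + 1) = (a / 2 * 2 + 2) * 2 ^ j := by ring
      _ ≤ (a + 2) * 2 ^ j := by gcongr; omega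
      _ ≤ q := hright

lemma exists_maximal_dyadicBlock_subset (hq : q < 2 ^ L) (hx : x ∈ Finset.Ico p q) :
    ∃ j < L, dyadicBlock j (x / 2 ^ j) ⊆ Finset.Ico p q ∧
      ¬ dyadicBlock (j + 1) (x / 2 ^ (j + 1)) ⊆ Finset.Ico p q := by
  have lt_of_subset {j : ℕ} (h : dyadicBlock j (x / 2 ^ j) ⊆ Finset.Ico p q) : j < L := by
    refine (Nat.pow_lt_pow_iff_right one_lt_two).1 (lt_of_le_of_lt ?_ hq)
    exact (Nat.le_mul_of_pos_left _ (Nat.succ_pos _)).trans (dyadicBlock_subset_Ico_iff.1 h).2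
  obtain ⟨j, hj, hj'⟩ := Nat.exists_not_and_succ_of_not_zero_of_exists
    (p := fun j => ¬ dyadicBlock j (x / 2 ^ j) ⊆ Finset.Ico p q)
    (by simpa [dyadicBlock] using hx) ⟨L, fun h => (lt_of_subset h).false⟩
  exact ⟨j, lt_of_subset (not_not.1 hj), not_not.1 hj, hj'⟩

lemma mem_Ico_iff_exists_mem_dyadicCover (hq : q < 2 ^ L) :
    x ∈ Finset.Ico p q ↔ ∃ j < L, (j, x / 2 ^ j) ∈ dyadicCover L p q := by
  constructor
  · intro hx
    obtain ⟨j, hjL, hblock, hparent⟩ := exists_maximal_dyadicBlock_subset hq hx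
    rw [pow_succ, ← Nat.div_div_eq_div_mul] at hparent
    exact ⟨j, hjL, mem_dyadicCover.2
      ⟨⟨hjL, eq_ceilDiv_or_eq_div_sub_one_of_dyadicBlock_subset hblock hparent⟩, hblock⟩⟩
  · rintro ⟨j, -, hj⟩
    exact (mem_dyadicCover.1 hj).2 (mem_dyadicBlock.2 rfl)

end Dyadic

section LinearOrder

variable {α : Type*} [LinearOrder α]

lemma card_filter_lt_mem_Ico_iff {W : Type*} [Fintype W] (f : W → α) (a b : α) (w : W) :
    #{w' | f w' < f w} ∈ Finset.Ico #{w' | f w' < a} #{w' | f w' ≤ b} ↔ f w ∈ Set.Icc a b := by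
  rw [Finset.mem_Ico, Set.mem_Icc]
  refine and_congr ⟨fun hle => ?_, fun ha => ?_⟩ ⟨fun hlt => ?_, fun hb => ?_⟩
  · by_contra! hw
    refine hle.not_gt (Finset.card_lt_card (Finset.ssubset_iff_of_subset ?_ |>.2 ⟨w, ?_, ?_⟩))
    · exact Finset.monotone_filter_right _ fun _ _ h => h.trans hw
    · simpa using hw
    · simp
  · exact Finset.card_le_card (Finset.monotone_filter_right _ fun _ _ h => h.trans_le ha)
  · by_contra! hw
    exact hlt.not_ge (Finset.card_le_card
      (Finset.monotone_filter_right _ fun _ _ h => h.trans_lt hw))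
  · refine Finset.card_lt_card (Finset.ssubset_iff_of_subset ?_ |>.2 ⟨w, ?_, ?_⟩)
    · exact Finset.monotone_filter_right _ fun _ _ h => h.le.trans hb
    · simpa using hb
    · simp

lemma nonempty_Icc_inter_Icc_iff {a b c d : α} (hab : a ≤ b) (hcd : c ≤ d) :
    (Set.Icc a b ∩ Set.Icc c d).Nonempty ↔ c ∈ Set.Icc a b ∨ a ∈ Set.Icc c d := by
  rw [Set.Icc_inter_Icc, Set.nonempty_Icc]
  grind

end LinearOrder

lemma nonempty_Icc_inter_Icc_pi_iff {κ : Type*} {α : κ → Type*} [∀ j, Lattice (α j)]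
    {a b c d : ∀ j, α j} : (Set.Icc a b ∩ Set.Icc c d).Nonempty ↔
      ∀ j, (Set.Icc (a j) (b j) ∩ Set.Icc (c j) (d j)).Nonempty := by
  simp only [← Set.pi_univ_Icc, ← Set.pi_inter_distrib, Set.univ_pi_nonempty_iff]

/-- The relation `r`, seen as a bipartite graph between `V` and `W`, is a union of bicliques such
that every `v : V` lies in at most `M` of them and every `w : W` in at most `N`.  The bicliques are
indexed by a type `ι`, and `A v`, `B w` are the sets of indices of those containing `v`, `w`. -/
def HasLocalBicliqueCover {V W : Type*} (r : V → W → Prop) (M N : ℕ) : Prop :=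
  ∃ (ι : Type) (A : V → Finset ι) (B : W → Finset ι),
    (∀ v, #(A v) ≤ M) ∧ (∀ w, #(B w) ≤ N) ∧ ∀ v w, r v w ↔ ∃ i ∈ A v, i ∈ B w

namespace HasLocalBicliqueCover

variable {V W : Type*} {r r' : V → W → Prop} {M M' N N' : ℕ}

protected lemma swap (h : HasLocalBicliqueCover r M N) :
    HasLocalBicliqueCover (fun w v => r v w) N M := by
  obtain ⟨ι, A, B, hA, hB, hr⟩ := h
  exact ⟨ι, B, A, hB, hA, fun w v => by simp only [hr, and_comm]⟩

protected lemma or (h : HasLocalBicliqueCover r M N) (h' : HasLocalBicliqueCover r' M' N') :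
    HasLocalBicliqueCover (fun v w => r v w ∨ r' v w) (M + M') (N + N') := by
  obtain ⟨ι, A, B, hA, hB, hr⟩ := h
  obtain ⟨ι', A', B', hA', hB', hr'⟩ := h'
  refine ⟨ι ⊕ ι', fun v => (A v).disjSum (A' v), fun w => (B w).disjSum (B' w), ?_, ?_, ?_⟩
  · exact fun v => by grw [Finset.card_disjSum, hA, hA']
  · exact fun w => by grw [Finset.card_disjSum, hB, hB']
  · simp [hr, hr']

protected lemma pi {κ : Type} [Fintype κ] {r : κ → V → W → Prop}
    (h : ∀ j, HasLocalBicliqueCover (r j) M N) :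
    HasLocalBicliqueCover (fun v w => ∀ j, r j v w) (M ^ Fintype.card κ) (N ^ Fintype.card κ) := by
  classical
  choose ι A B hA hB hr using h
  refine ⟨∀ j, ι j, fun v => Fintype.piFinset fun j => A j v,
    fun w => Fintype.piFinset fun j => B j w, ?_, ?_, ?_⟩
  · exact fun v => (Fintype.card_piFinset _).trans_le
      (Finset.prod_le_pow_card _ _ _ fun j _ => hA j v)
  · exact fun w => (Fintype.card_piFinset _).trans_le
      (Finset.prod_le_pow_card _ _ _ fun j _ => hB j w)
  · simp only [hr, Fintype.mem_piFinset, Classical.skolem, forall_and, implies_true]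

end HasLocalBicliqueCover

section BoxCovers

variable {V W : Type*} {L : ℕ}

lemma hasLocalBicliqueCover_mem_Ico {p q : V → ℕ} (x : W → ℕ) (hq : ∀ v, q v < 2 ^ L) :
    HasLocalBicliqueCover (fun v w => x w ∈ Finset.Ico (p v) (q v)) (2 * L) L := by
  refine ⟨ℕ × ℕ, fun v => dyadicCover L (p v) (q v),
    fun w => (Finset.range L).image fun j => (j, x w / 2 ^ j), ?_, ?_, fun v w => ?_⟩
  · exact fun v => card_dyadicCover_le L (p v) (q v)
  · exact fun w => Finset.card_image_le.trans (Finset.card_range L).le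
  · simp [mem_Ico_iff_exists_mem_dyadicCover (hq v), and_comm]

variable {α : Type*} [LinearOrder α]

lemma hasLocalBicliqueCover_mem_Icc [Fintype W] (hL : Fintype.card W < 2 ^ L) (a b : V → α)
    (f : W → α) : HasLocalBicliqueCover (fun v w => f w ∈ Set.Icc (a v) (b v)) (2 * L) L := by
  simp only [← card_filter_lt_mem_Ico_iff]
  exact hasLocalBicliqueCover_mem_Ico _ fun v => (Finset.card_le_univ _).trans_lt hL

variable [Fintype V]

lemma hasLocalBicliqueCover_intervals (hL : Fintype.card V < 2 ^ L) {lo hi : V → α}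
    (h : ∀ v, lo v ≤ hi v) : HasLocalBicliqueCover
      (fun u v => (Set.Icc (lo u) (hi u) ∩ Set.Icc (lo v) (hi v)).Nonempty) (3 * L) (3 * L) := by
  have hmem := hasLocalBicliqueCover_mem_Icc hL lo hi lo
  simp only [nonempty_Icc_inter_Icc_iff (h _) (h _)]
  convert hmem.or hmem.swap using 1 <;> ring

lemma hasLocalBicliqueCover_boxes {κ : Type} [Fintype κ] {α : κ → Type*} [∀ j, LinearOrder (α j)]
    (hL : Fintype.card V < 2 ^ L) {lo hi : V → ∀ j, α j} (h : ∀ v, lo v ≤ hi v) :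
    HasLocalBicliqueCover (fun u v => (Set.Icc (lo u) (hi u) ∩ Set.Icc (lo v) (hi v)).Nonempty)
      ((3 * L) ^ Fintype.card κ) ((3 * L) ^ Fintype.card κ) := by
  simp only [nonempty_Icc_inter_Icc_pi_iff]
  exact .pi fun j => hasLocalBicliqueCover_intervals hL fun v => h v j

end BoxCovers

section EdgeCount

variable {V ι : Type*} {G : SimpleGraph V} {s t : ℕ}

lemma completeBipartiteGraph_free_iff_not_exists_disjoint :
    (completeBipartiteGraph (Fin s) (Fin t)).Free G ↔
      ¬ ∃ S T : Finset V, Disjoint S T ∧ #S = s ∧ #T = t ∧ ∀ x ∈ S, ∀ y ∈ T, G.Adj x y := by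
  rw [SimpleGraph.Free, SimpleGraph.completeBipartiteGraph_isContained_iff]
  simp only [Fintype.card_fin]
  refine not_congr ⟨fun ⟨S, T, hS, hT, hST⟩ => ?_, fun ⟨S, T, _, hS, hT, hST⟩ => ?_⟩
  · exact ⟨S, T, Finset.disjoint_coe.1 hST.disjoint, hS, hT, fun _ hx _ hy => hST hx hy⟩
  · exact ⟨S, T, hS, hT, fun x hx y hy => hST x hx y hy⟩

lemma card_lt_or_card_lt_of_completeBipartiteGraph_free
    (hG : (completeBipartiteGraph (Fin s) (Fin t)).Free G) {X Y : Finset V}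
    (hXY : ∀ x ∈ X, ∀ y ∈ Y, x ≠ y → G.Adj x y) : #X < s ∨ #Y < s + t := by
  classical
  by_contra! hcard
  obtain ⟨S, hSX, hS⟩ := Finset.exists_subset_card_eq hcard.1
  -- `X` and `Y` may overlap, so the other side is taken in `Y \ S`.
  have hYS : t ≤ #(Y \ S) := by
    have := Finset.le_card_sdiff S Y
    omega
  obtain ⟨T, hTY, hT⟩ := Finset.exists_subset_card_eq hYS
  refine hG (SimpleGraph.completeBipartiteGraph_isContained_iff.2
    ⟨S, T, by simpa using hS, by simpa using hT, fun x hx y hy => ?_⟩)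
  obtain ⟨hyY, hyS⟩ := Finset.mem_sdiff.1 (hTY hy)
  exact hXY x (hSX hx) y hyY fun hxy => hyS (hxy ▸ hx)

lemma card_mul_card_le_of_completeBipartiteGraph_free
    (hG : (completeBipartiteGraph (Fin s) (Fin t)).Free G) {X Y : Finset V}
    (hXY : ∀ x ∈ X, ∀ y ∈ Y, x ≠ y → G.Adj x y) : #X * #Y ≤ (s + t) * (#X + #Y) := by
  rcases card_lt_or_card_lt_of_completeBipartiteGraph_free hG hXY with hX | hY <;> nlinarith

lemma ncard_edgeSet_le_sum_card_mul_card (I : Finset ι) (X Y : ι → Finset V)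
    (hG : ∀ u v, G.Adj u v → ∃ i ∈ I, u ∈ X i ∧ v ∈ Y i) :
    G.edgeSet.ncard ≤ ∑ i ∈ I, #(X i) * #(Y i) := by
  classical
  have hsub : G.edgeSet ⊆ (I.biUnion fun i => X i ×ˢ Y i).image fun e => s(e.1, e.2) := by
    intro e he
    induction e with | _ u v
    obtain ⟨i, hiI, hu, hv⟩ := hG u v he
    exact Finset.mem_coe.2 (Finset.mem_image.2
      ⟨(u, v), Finset.mem_biUnion.2 ⟨i, hiI, Finset.mk_mem_product hu hv⟩, rfl⟩)
  calc G.edgeSet.ncard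
      ≤ #((I.biUnion fun i => X i ×ˢ Y i).image fun e => s(e.1, e.2)) := by
        simpa only [Set.ncard_coe_finset] using Set.ncard_le_ncard hsub
    _ ≤ #(I.biUnion fun i => X i ×ˢ Y i) := Finset.card_image_le
    _ ≤ ∑ i ∈ I, #(X i ×ˢ Y i) := Finset.card_biUnion_le
    _ = ∑ i ∈ I, #(X i) * #(Y i) := by simp only [Finset.card_product]

variable [Fintype V]

lemma sum_card_filter_mem_le [DecidableEq ι] (I : Finset ι) {A : V → Finset ι} {N : ℕ}
    (hA : ∀ v, #(A v) ≤ N) : ∑ i ∈ I, #{v | i ∈ A v} ≤ N * Fintype.card V :=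
  calc ∑ i ∈ I, #{v | i ∈ A v} = ∑ v, #{i ∈ I | i ∈ A v} :=
        Finset.sum_card_bipartiteAbove_eq_sum_card_bipartiteBelow fun i v => i ∈ A v
    _ ≤ ∑ _v : V, N := Finset.sum_le_sum fun v _ =>
        (Finset.card_le_card fun _ hi => (Finset.mem_filter.1 hi).2).trans (hA v)
    _ = N * Fintype.card V := by simp [mul_comm]

lemma HasLocalBicliqueCover.ncard_edgeSet_le {r : V → V → Prop} {M N : ℕ}
    (hr : HasLocalBicliqueCover r M N) (hGr : ∀ u v, G.Adj u v ↔ u ≠ v ∧ r u v)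
    (hG : (completeBipartiteGraph (Fin s) (Fin t)).Free G) :
    G.edgeSet.ncard ≤ (s + t) * ((M + N) * Fintype.card V) := by
  classical
  obtain ⟨ι, A, B, hA, hB, hr⟩ := hr
  let I := Finset.univ.biUnion A
  let X : ι → Finset V := fun i => {v | i ∈ A v}
  let Y : ι → Finset V := fun i => {v | i ∈ B v}
  have hcover : ∀ u v, G.Adj u v → ∃ i ∈ I, u ∈ X i ∧ v ∈ Y i := fun u v huv => by
    obtain ⟨i, hiA, hiB⟩ := (hr u v).1 ((hGr u v).1 huv).2
    exact ⟨i, Finset.mem_biUnion.2 ⟨u, Finset.mem_univ u, hiA⟩, by simpa [X, Y] using ⟨hiA, hiB⟩⟩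
  have hXY : ∀ i, ∀ x ∈ X i, ∀ y ∈ Y i, x ≠ y → G.Adj x y := fun i x hx y hy hxy =>
    (hGr x y).2 ⟨hxy, (hr x y).2 ⟨i, by simpa [X] using hx, by simpa [Y] using hy⟩⟩
  calc G.edgeSet.ncard
      ≤ ∑ i ∈ I, #(X i) * #(Y i) := ncard_edgeSet_le_sum_card_mul_card I X Y hcover
    _ ≤ ∑ i ∈ I, (s + t) * (#(X i) + #(Y i)) := Finset.sum_le_sum fun i _ =>
        card_mul_card_le_of_completeBipartiteGraph_free hG (hXY i)
    _ = (s + t) * (∑ i ∈ I, #(X i) + ∑ i ∈ I, #(Y i)) := by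
        rw [← Finset.mul_sum, Finset.sum_add_distrib]
    _ ≤ (s + t) * (M * Fintype.card V + N * Fintype.card V) := by
        gcongr
        exacts [sum_card_filter_mem_le I hA, sum_card_filter_mem_le I hB]
    _ = (s + t) * ((M + N) * Fintype.card V) := by rw [add_mul M]

end EdgeCount

lemma natLog_two_add_one_le_two_mul_logb {n : ℕ} (hn : 2 ≤ n) :
    (Nat.log 2 n + 1 : ℝ) ≤ 2 * Real.logb 2 n := by
  have hone : (1 : ℝ) ≤ Real.logb 2 n := by
    rw [Real.le_logb_iff_rpow_le one_lt_two (by positivity)]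
    exact_mod_cast hn
  have hlog : (Nat.log 2 n : ℝ) ≤ Real.logb 2 n := Real.natLog_le_logb n 2
  linarith

theorem stmt_15_general {κ : Type} [Fintype κ] {α : κ → Type*} [∀ j, LinearOrder (α j)]
    {V : Type*} [Fintype V] (hV : 2 ≤ Fintype.card V) {s t : ℕ}
    {lo hi : V → ∀ j, α j} (h : ∀ v, lo v ≤ hi v) {G : SimpleGraph V}
    (hG : ∀ u v, G.Adj u v ↔ u ≠ v ∧
      (Set.Icc (lo u) (hi u) ∩ Set.Icc (lo v) (hi v)).Nonempty)
    (hfree : (completeBipartiteGraph (Fin s) (Fin t)).Free G) :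
    (G.edgeSet.ncard : ℝ) ≤ 2 * 6 ^ Fintype.card κ * (s + t) * Fintype.card V *
      Real.logb 2 (Fintype.card V) ^ Fintype.card κ := by
  set n := Fintype.card V
  set d := Fintype.card κ
  have hlt : n < 2 ^ (Nat.log 2 n + 1) := Nat.lt_pow_succ_log_self one_lt_two n
  have hcount := (hasLocalBicliqueCover_boxes hlt h).ncard_edgeSet_le hG hfree
  calc (G.edgeSet.ncard : ℝ)
      ≤ (s + t) * (((3 * (Nat.log 2 n + 1)) ^ d + (3 * (Nat.log 2 n + 1)) ^ d) * n) :=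
        mod_cast hcount
    _ = 2 * (s + t) * n * (3 * (Nat.log 2 n + 1)) ^ d := by ring
    _ ≤ 2 * (s + t) * n * (3 * (2 * Real.logb 2 n)) ^ d := by
        gcongr
        exact natLog_two_add_one_le_two_mul_logb hV
    _ = 2 * 6 ^ d * (s + t) * n * Real.logb 2 n ^ d := by
        rw [← mul_assoc, mul_pow]
        ring

/-- A `K_{t,t}`-free intersection graph of `n` axis-aligned boxes in `ℝ^d` has
at most `O(t · n (log₂ n)^d)` edges. -/
theorem stmt_15 (d t : ℕ) (hd : 1 ≤ d) (ht : 1 ≤ t) :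
    ∃ C : ℝ, 0 < C ∧ ∀ n : ℕ, 2 ≤ n →
      ∀ (lo hi : Fin n → Fin d → ℝ), (∀ v, lo v ≤ hi v) →
      ∀ G : SimpleGraph (Fin n),
      (∀ u v, G.Adj u v ↔ u ≠ v ∧
        (Set.Icc (lo u) (hi u) ∩ Set.Icc (lo v) (hi v)).Nonempty) →
      (¬ ∃ S T : Finset (Fin n), Disjoint S T ∧ S.card = t ∧ T.card = t ∧
        ∀ x ∈ S, ∀ y ∈ T, G.Adj x y) →
      (G.edgeSet.ncard : ℝ) ≤ C * (t : ℝ) * (n : ℝ) * (Real.logb 2 n) ^ d := by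
  refine ⟨4 * 6 ^ d, by positivity, fun n hn lo hi h G hG hK => ?_⟩
  have hbound := stmt_15_general (by rwa [Fintype.card_fin]) h hG
    (completeBipartiteGraph_free_iff_not_exists_disjoint.2 hK)
  simp only [Fintype.card_fin] at hbound
  linarith
end

section
/- There exists a constant C > 0 such that for all n ≥ 2 the following holds. Let R be a family of at most n pairwise disjoint closed line segments in ℝ² (red) and B a family of at most n pairwise disjoint closed line segments in ℝ² (blue). Then the bipartite intersection graph G on vertex set R ∪ B, in which r ∈ R and b ∈ B are adjacent if and only if r ∩ b ≠ ∅ (and there are no edges within R or within B), admits a biclique cover of size at most C · n · (log₂ n)³. -/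
/-!
The argument works for disjoint convex sets, and gives `O(n (log n)²)`.

On a line, store each interval in the `O(log n)` maximal dyadic blocks of a segment tree that it
contains. Around a common point of two intervals, the larger of their two blocks is spanned by one
interval and visited by the other, and at each node the spanning intervals form a biclique with
those meeting the block. As an interval visits `O(1)` nodes per level, intersections of intervals
have covers of size `O(n log n)`.

In the plane, build the segment tree on the projections to the `x`-axis. Within the slab of a node,
disjoint convex sets spanning the slab are linearly ordered from bottom to top, and every other
convex set meets a contiguous run of them. Points and runs are again intervals of a line, so each
node costs a further logarithmic factor.
-/

open scoped Finset Function

/-- The bipartite version of `IsBicliqueCover` with a size bound: finitely many bicliques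
`A i × B i` of the relation `R`, of total size at most `k`, cover all pairs related by `R`. -/
def HasBicliqueCover {α β : Type*} (R : α → β → Prop) (k : ℕ) : Prop :=
  ∃ (m : ℕ) (A : Fin m → Finset α) (B : Fin m → Finset β),
    (∀ i, ∀ a ∈ A i, ∀ b ∈ B i, R a b) ∧
    (∀ a b, R a b → ∃ i, a ∈ A i ∧ b ∈ B i) ∧
    ∑ i, (#(A i) + #(B i)) ≤ k

namespace HasBicliqueCover

variable {α β κ : Type*} {R R' : α → β → Prop} {k l : ℕ}

lemma of_fintype [Fintype κ] (A : κ → Finset α) (B : κ → Finset β)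
    (hAB : ∀ i, ∀ a ∈ A i, ∀ b ∈ B i, R a b) (hR : ∀ a b, R a b → ∃ i, a ∈ A i ∧ b ∈ B i)
    (hk : ∑ i, (#(A i) + #(B i)) ≤ k) : HasBicliqueCover R k := by
  let e := (Fintype.equivFin κ).symm
  refine ⟨_, A ∘ e, B ∘ e, fun i => hAB (e i), fun a b hab => ?_, ?_⟩
  · obtain ⟨i, hi⟩ := hR a b hab
    exact ⟨e.symm i, by simpa using hi⟩
  · exact (e.sum_comp fun i => #(A i) + #(B i)).trans_le hk

lemma mono (h : HasBicliqueCover R k) (hkl : k ≤ l) : HasBicliqueCover R l := by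
  obtain ⟨m, A, B, hAB, hR, hk⟩ := h
  exact ⟨m, A, B, hAB, hR, hk.trans hkl⟩

lemma congr (h : HasBicliqueCover R k) (hRR' : ∀ a b, R a b ↔ R' a b) :
    HasBicliqueCover R' k := by
  simpa only [HasBicliqueCover, hRR'] using h

lemma swap (h : HasBicliqueCover R k) : HasBicliqueCover (fun b a => R a b) k := by
  obtain ⟨m, A, B, hAB, hR, hk⟩ := h
  refine ⟨m, B, A, fun i b hb a ha => hAB i a ha b hb,
    fun b a hab => (hR a b hab).imp fun _ => And.symm, ?_⟩
  simpa only [add_comm] using hk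

lemma iUnion [Fintype κ] {R : κ → α → β → Prop} {c : κ → ℕ}
    (h : ∀ i, HasBicliqueCover (R i) (c i)) :
    HasBicliqueCover (fun a b => ∃ i, R i a b) (∑ i, c i) := by
  choose m A B hAB hR hc using h
  refine of_fintype (fun p : Σ i, Fin (m i) => A p.1 p.2) (fun p => B p.1 p.2)
    (fun p a ha b hb => ⟨p.1, hAB p.1 p.2 a ha b hb⟩) ?_ ?_
  · rintro a b ⟨i, hab⟩
    obtain ⟨j, hj⟩ := hR i a b hab
    exact ⟨⟨i, j⟩, hj⟩
  · rw [Fintype.sum_sigma]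
    exact Finset.sum_le_sum fun i _ => hc i

lemma union (h : HasBicliqueCover R k) (h' : HasBicliqueCover R' l) :
    HasBicliqueCover (fun a b => R a b ∨ R' a b) (k + l) := by
  have h_union := iUnion (R := fun i : Bool => if i then R else R')
    (c := fun i => if i then k else l) (by simp [h, h'])
  simpa [or_comm] using h_union

lemma of_subtype {s : Finset α} {t : Finset β}
    (h : HasBicliqueCover (fun (a : s) (b : t) => R a b) k) :
    HasBicliqueCover (fun a b => a ∈ s ∧ b ∈ t ∧ R a b) k := by
  obtain ⟨m, A, B, hAB, hR, hk⟩ := h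
  refine ⟨m, fun i => (A i).map (.subtype _), fun i => (B i).map (.subtype _), ?_, ?_, ?_⟩
  · intro i a ha b hb
    obtain ⟨a, ha', rfl⟩ := Finset.mem_map.1 ha
    obtain ⟨b, hb', rfl⟩ := Finset.mem_map.1 hb
    exact ⟨a.2, b.2, hAB i a ha' b hb'⟩
  · rintro a b ⟨ha, hb, hab⟩
    obtain ⟨i, hai, hbi⟩ := hR ⟨a, ha⟩ ⟨b, hb⟩ hab
    exact ⟨i, Finset.mem_map_of_mem _ hai, Finset.mem_map_of_mem _ hbi⟩
  · simpa only [Finset.card_map] using hk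

open Classical in
lemma const_left [Fintype α] [Fintype β] (p : β → Prop) :
    HasBicliqueCover (fun (_ : α) b => p b) (Fintype.card α + Fintype.card β) :=
  of_fintype (κ := Unit) (fun _ => Finset.univ) (fun _ => {b | p b}) (by simp) (by simp)
    (by simpa using Finset.card_le_univ {b | p b})

lemma exists_isBicliqueCover {G : SimpleGraph (α ⊕ β)} (h : HasBicliqueCover R k)
    (hG : ∀ a b, G.Adj (.inl a) (.inr b) ↔ R a b)
    (hl : ∀ a a', ¬ G.Adj (.inl a) (.inl a')) (hr : ∀ b b', ¬ G.Adj (.inr b) (.inr b')) :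
    ∃ (m : ℕ) (A B : Fin m → Finset (α ⊕ β)), IsBicliqueCover G A B ∧ coverSize A B ≤ k := by
  obtain ⟨m, A, B, hAB, hR, hk⟩ := h
  have h_edge (a b) (hab : G.Adj (.inl a) (.inr b)) : ∃ i, a ∈ A i ∧ b ∈ B i :=
    hR a b ((hG a b).1 hab)
  refine ⟨m, fun i => (A i).map .inl, fun i => (B i).map .inr,
    ⟨fun i => Finset.disjoint_map_inl_map_inr _ _, ?_, ?_⟩, ?_⟩
  · simpa [hG] using hAB
  · rintro (a | b) (a' | b') hadj
    · exact absurd hadj (hl a a')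
    · simpa using h_edge a b' hadj
    · simpa using h_edge a' b hadj.symm
    · exact absurd hadj (hr b b')
  · simpa [coverSize] using hk

end HasBicliqueCover

section Rank

variable {X ι : Type*} [LinearOrder X] [Fintype ι]

open Classical in
lemma mem_iff_card_subset_le_card_mem {U : ι → Set X} (hU : ∀ i, IsUpperSet (U i)) (i : ι)
    (x : X) : x ∈ U i ↔ #{j | U i ⊆ U j} ≤ #{j | x ∈ U j} := by
  constructor
  · intro hx
    exact Finset.card_le_card fun j hj => by simpa using (Finset.mem_filter.1 hj).2 hx
  · contrapose!
    refine fun hx => Finset.card_lt_card ((Finset.ssubset_iff_of_subset fun j hj => ?_).2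
      ⟨i, by simp, by simpa using hx⟩)
    have hxj : x ∈ U j := by simpa using hj
    simpa using ((hU i).total (hU j)).resolve_right fun hji => hx (hji hxj)

lemma exists_monotone_rank {I : ι → Set X} (hI : ∀ i, (I i).OrdConnected) :
    ∃ (ρ : X → ℕ) (lo hi : ι → ℕ), Monotone ρ ∧ (∀ i, hi i ≤ 2 * Fintype.card ι) ∧
      ∀ i x, x ∈ I i ↔ ρ x ∈ Set.Ico (lo i) (hi i) := by
  classical
  -- The ends of an interval are recorded as upper sets, since `X` may lack endpoints for it.
  let U : ι ⊕ ι → Set X :=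
    Sum.elim (fun i => upperClosure (I i)) (fun i => (lowerClosure (I i) : Set X)ᶜ)
  have hU (i) : IsUpperSet (U i) := by
    rcases i with i | i
    exacts [(upperClosure (I i)).upper, (lowerClosure (I i)).lower.compl]
  refine ⟨fun x => #{j | x ∈ U j}, fun i => #{j | U (.inl i) ⊆ U j},
    fun i => #{j | U (.inr i) ⊆ U j}, fun x y hxy => ?_, fun i => ?_, fun i x => ?_⟩
  · exact Finset.card_le_card <| Finset.monotone_filter_right _ fun j _ => hU j hxy
  · simpa [two_mul] using Finset.card_le_univ {j | U (.inr i) ⊆ U j}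
  · rw [Set.mem_Ico, ← mem_iff_card_subset_le_card_mem hU, ← not_le,
      ← mem_iff_card_subset_le_card_mem hU, ← (hI i).upperClosure_inter_lowerClosure]
    simp [U]

end Rank

/-- A node of the binary tree over `ℕ` is a pair `(k, j)` standing for the block
`{u | u / 2 ^ k = j}`. The interval `[lo, hi)` visits the node if the parent block contains `lo`
or `hi`. -/
def Visits (lo hi k j : ℕ) : Prop := j / 2 = lo / 2 ^ (k + 1) ∨ j / 2 = hi / 2 ^ (k + 1)

open Classical in
lemma card_filter_visits_le (lo hi k N : ℕ) : #{j : Fin N | Visits lo hi k j} ≤ 4 := by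
  let x := lo / 2 ^ (k + 1)
  let y := hi / 2 ^ (k + 1)
  refine (Finset.card_le_card_of_injOn (t := {2 * x, 2 * x + 1, 2 * y, 2 * y + 1}) Fin.val
    (fun j hj => ?_) Fin.val_injective.injOn).trans Finset.card_le_four
  have hj : j.val / 2 = x ∨ j.val / 2 = y := (Finset.mem_filter.1 hj).2
  simp only [Finset.coe_insert, Finset.coe_singleton, Set.mem_insert_iff, Set.mem_singleton_iff]
  omega

lemma exists_dyadic_subset_Ico {t lo hi d : ℕ} (ht : t ∈ Set.Ico lo hi) (hd : hi < 2 ^ d) :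
    ∃ k < d, {u | u / 2 ^ k = t / 2 ^ k} ⊆ Set.Ico lo hi ∧
      ∀ l ≥ k, Visits lo hi l (t / 2 ^ l) := by
  let Inside (k : ℕ) : Prop := {u | u / 2 ^ k = t / 2 ^ k} ⊆ Set.Ico lo hi
  have h_zero : Inside 0 := by simpa [Inside] using ht
  have h_top {k : ℕ} (hk : d ≤ k) : ¬ Inside k := fun h => by
    have hik : hi < 2 ^ k := hd.trans_le (Nat.pow_le_pow_right two_pos hk)
    have : hi ∈ Set.Ico lo hi := h <| by
      change hi / 2 ^ k = t / 2 ^ k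
      rw [Nat.div_eq_of_lt hik, Nat.div_eq_of_lt (ht.2.trans hik)]
    exact lt_irrefl _ this.2
  -- Take the largest block around `t` contained in the interval.
  obtain ⟨k, h_in, h_out⟩ := Nat.exists_not_and_succ_of_not_zero_of_exists
    (p := fun k => ¬ Inside k) (not_not_intro h_zero) ⟨d, h_top le_rfl⟩
  rw [not_not] at h_in
  refine ⟨k, lt_of_not_ge fun hk => h_top hk h_in, h_in, fun l hl => ?_⟩
  obtain ⟨u, hu, hu_out⟩ := Set.not_subset.1 h_out
  have hul : u / 2 ^ (l + 1) = t / 2 ^ (l + 1) := by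
    obtain ⟨e, rfl⟩ := Nat.exists_eq_add_of_le hl
    have h_div (v : ℕ) : v / 2 ^ (k + e + 1) = v / 2 ^ (k + 1) / 2 ^ e := by
      rw [Nat.div_div_eq_div_mul, ← pow_add, add_right_comm]
    rw [h_div, h_div, hu]
  rw [Visits, Nat.div_div_eq_div_mul, ← pow_succ]
  have h_mono {v w : ℕ} (hvw : v ≤ w) := Nat.div_le_div_right (c := 2 ^ (l + 1)) hvw
  rcases lt_or_ge u lo with hlo | hlo
  · exact .inl (le_antisymm (hul ▸ h_mono hlo.le) (h_mono ht.1))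
  · exact .inr (le_antisymm (h_mono ht.2.le) (hul ▸ h_mono (le_of_not_gt fun h => hu_out ⟨hlo, h⟩)))

/-- A segment tree, as a set of nodes `κ`, for a family `I` of intervals: each node `v` has a slab
and a set of intervals visiting it, and around each common point of `I i` and `I j` there is a slab
visited by both of them and spanned by at least one. -/
structure IsSegmentTree {X ι κ : Type*} [Preorder X] (I : ι → Set X) (slab : κ → Set X)
    (visitors : κ → Finset ι) : Prop where
  ordConnected_slab (v : κ) : (slab v).OrdConnected
  exists_node {i j : ι} {x : X} (hi : x ∈ I i) (hj : x ∈ I j) :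
    ∃ v, x ∈ slab v ∧ i ∈ visitors v ∧ j ∈ visitors v ∧ (slab v ⊆ I i ∨ slab v ⊆ I j)

lemma exists_isSegmentTree {X ι : Type*} [LinearOrder X] [Fintype ι] {I : ι → Set X}
    (hI : ∀ i, (I i).OrdConnected) {d : ℕ} (hd : 2 * Fintype.card ι < 2 ^ d) :
    ∃ (slab : Fin d × Fin (2 ^ d) → Set X) (visitors : Fin d × Fin (2 ^ d) → Finset ι),
      IsSegmentTree I slab visitors ∧ ∑ v, #(visitors v) ≤ 4 * d * Fintype.card ι := by
  classical
  obtain ⟨ρ, lo, hi, hρ, h_le, hmem⟩ := exists_monotone_rank hI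
  have h_lt (i) : hi i < 2 ^ d := (h_le i).trans_lt hd
  refine ⟨fun v => (fun x => ρ x / 2 ^ v.1.val) ⁻¹' {v.2.val},
    fun v => {i | Visits (lo i) (hi i) v.1 v.2},
    ⟨fun v => Set.ordConnected_singleton.preimage_mono fun x y hxy =>
      Nat.div_le_div_right (hρ hxy), fun {i j x} hxi hxj => ?_⟩, ?_⟩
  · rw [hmem] at hxi hxj
    obtain ⟨k, hk, hik, hi_visits⟩ := exists_dyadic_subset_Ico hxi (h_lt i)
    obtain ⟨l, hl, hjl, hj_visits⟩ := exists_dyadic_subset_Ico hxj (h_lt j)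
    have h_node (m : ℕ) : ρ x / 2 ^ m < 2 ^ d :=
      (Nat.div_le_self _ _).trans_lt (hxi.2.trans (h_lt i))
    -- The larger of the two blocks is visited by both intervals.
    rcases le_total k l with hkl | hlk
    · exact ⟨⟨⟨l, hl⟩, ⟨_, h_node l⟩⟩, rfl, by simpa using hi_visits l hkl,
        by simpa using hj_visits l le_rfl, .inr fun y hy => (hmem j y).2 (hjl hy)⟩
    · exact ⟨⟨⟨k, hk⟩, ⟨_, h_node k⟩⟩, rfl, by simpa using hi_visits k le_rfl,
        by simpa using hj_visits k hlk, .inl fun y hy => (hmem i y).2 (hik hy)⟩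
  · calc ∑ v : Fin d × Fin (2 ^ d), #{i | Visits (lo i) (hi i) v.1 v.2}
        = ∑ k : Fin d, ∑ i, #{j : Fin (2 ^ d) | Visits (lo i) (hi i) k j} := by
          rw [Fintype.sum_prod_type]
          exact Finset.sum_congr rfl fun k _ =>
            Finset.sum_card_bipartiteAbove_eq_sum_card_bipartiteBelow
              fun (j : Fin (2 ^ d)) i => Visits (lo i) (hi i) k j
      _ ≤ ∑ _k : Fin d, ∑ _i : ι, 4 := by gcongr; exact card_filter_visits_le ..
      _ = 4 * d * Fintype.card ι := by simp; ring

/-- One dimension of a divide and conquer: `π` projects the points to a line, and it is enough to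
cover, within each slab, the incidences of the sets that span the slab. -/
lemma hasBicliqueCover_inter_of_slab {P X α β : Type*} [LinearOrder X] [Fintype α] [Fintype β]
    (π : P → X) {A : α → Set P} {B : β → Set P} {c d : ℕ}
    (hA : ∀ a, (π '' A a).OrdConnected) (hB : ∀ b, (π '' B b).OrdConnected)
    (hd : 2 * (Fintype.card α + Fintype.card β) < 2 ^ d)
    (hl : ∀ (Y : Set X) (S : Finset α) (T : Finset β), Y.OrdConnected → (∀ a ∈ S, Y ⊆ π '' A a) →
      HasBicliqueCover (fun (a : S) (b : T) => (A a ∩ B b ∩ π ⁻¹' Y).Nonempty) (c * (#S + #T)))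
    (hr : ∀ (Y : Set X) (S : Finset α) (T : Finset β), Y.OrdConnected → (∀ b ∈ T, Y ⊆ π '' B b) →
      HasBicliqueCover (fun (a : S) (b : T) => (A a ∩ B b ∩ π ⁻¹' Y).Nonempty) (c * (#S + #T))) :
    HasBicliqueCover (fun a b => (A a ∩ B b).Nonempty)
      (8 * c * d * (Fintype.card α + Fintype.card β)) := by
  classical
  let I : α ⊕ β → Set X := Sum.elim (fun a => π '' A a) (fun b => π '' B b)
  obtain ⟨slab, visitors, h_tree, h_card⟩ := exists_isSegmentTree (I := I) (d := d)
    (Sum.forall.2 ⟨hA, hB⟩) (by simpa using hd)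
  let S (v) := (visitors v).toLeft
  let T (v) := (visitors v).toRight
  let MeetIn (v) (a : α) (b : β) : Prop := (A a ∩ B b ∩ π ⁻¹' slab v).Nonempty
  have h_left (v) := HasBicliqueCover.of_subtype (R := MeetIn v) <|
    hl (slab v) {a ∈ S v | slab v ⊆ π '' A a} (T v) (h_tree.ordConnected_slab v) (by simp)
  have h_right (v) := HasBicliqueCover.of_subtype (R := MeetIn v) <|
    hr (slab v) (S v) {b ∈ T v | slab v ⊆ π '' B b} (h_tree.ordConnected_slab v) (by simp)
  refine ((HasBicliqueCover.iUnion fun v => (h_left v).union (h_right v)).congr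
    fun a b => ⟨?_, ?_⟩).mono ?_
  · rintro ⟨v, ⟨-, -, h⟩ | ⟨-, -, h⟩⟩ <;> exact h.mono Set.inter_subset_left
  · rintro ⟨p, hpa, hpb⟩
    obtain ⟨v, hpv, ha, hb, h_span⟩ := h_tree.exists_node (i := .inl a) (j := .inr b)
      (Set.mem_image_of_mem π hpa) (Set.mem_image_of_mem π hpb)
    have h_meet : MeetIn v a b := ⟨p, ⟨hpa, hpb⟩, hpv⟩
    exact ⟨v, h_span.imp (fun h => ⟨by simpa [S] using ⟨ha, h⟩, by simpa [T] using hb, h_meet⟩)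
      (fun h => ⟨by simpa [S] using ha, by simpa [T] using ⟨hb, h⟩, h_meet⟩)⟩
  · calc _ ≤ ∑ v, (c * #(visitors v) + c * #(visitors v)) := by
          gcongr with v
          all_goals
            rw [← Finset.card_toLeft_add_card_toRight (u := visitors v)]
            gcongr
            exact Finset.filter_subset _ _
      _ = 2 * c * ∑ v, #(visitors v) := by rw [Finset.mul_sum]; congr! 1; ring
      _ ≤ 2 * c * (4 * d * Fintype.card (α ⊕ β)) := by gcongr
      _ = 8 * c * d * (Fintype.card α + Fintype.card β) := by rw [Fintype.card_sum]; ring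

lemma hasBicliqueCover_inter_of_ordConnected {X α β : Type*} [LinearOrder X] [Fintype α]
    [Fintype β] {I : α → Set X} {J : β → Set X} (hI : ∀ a, (I a).OrdConnected)
    (hJ : ∀ b, (J b).OrdConnected) {d : ℕ}
    (hd : 2 * (Fintype.card α + Fintype.card β) < 2 ^ d) :
    HasBicliqueCover (fun a b => (I a ∩ J b).Nonempty)
      (8 * d * (Fintype.card α + Fintype.card β)) := by
  have h := hasBicliqueCover_inter_of_slab (c := 1) id (A := I) (B := J) (by simpa using hI)
    (by simpa using hJ) hd
  rw [mul_one] at h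
  simp only [Set.image_id, Set.preimage_id, one_mul] at h
  apply h
  · intro Y S T _ hS
    have h_node := HasBicliqueCover.const_left (α := S) fun b : T => (J b ∩ Y).Nonempty
    rw [Fintype.card_coe, Fintype.card_coe] at h_node
    refine h_node.congr fun a b => ?_
    rw [Set.inter_right_comm, Set.inter_eq_right.2 (hS a a.2), Set.inter_comm]
  · intro Y S T _ hT
    have h_node := (HasBicliqueCover.const_left (α := T) fun a : S => (I a ∩ Y).Nonempty).swap
    rw [Fintype.card_coe, Fintype.card_coe, add_comm] at h_node
    refine h_node.congr fun a b => ?_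
    rw [Set.inter_assoc, Set.inter_eq_right.2 (hT b b.2)]

section Convex

variable {𝕜 α β : Type*} [Field 𝕜] [LinearOrder 𝕜] [IsStrictOrderedRing 𝕜]

lemma inter_nonempty_of_convex_of_crossing {s t : Set (𝕜 × 𝕜)} (hs : Convex 𝕜 s)
    (ht : Convex 𝕜 t) {x₀ x₁ a₀ a₁ b₀ b₁ : 𝕜} (ha₀ : (x₀, a₀) ∈ s) (ha₁ : (x₁, a₁) ∈ s)
    (hb₀ : (x₀, b₀) ∈ t) (hb₁ : (x₁, b₁) ∈ t) (h₀ : a₀ ≤ b₀) (h₁ : b₁ ≤ a₁) :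
    (s ∩ t).Nonempty := by
  have h_zero : 0 ∈ segment 𝕜 (b₀ - a₀) (b₁ - a₁) := by
    rw [segment_eq_uIcc]
    exact Set.mem_uIcc.2 (.inr ⟨sub_nonpos.2 h₁, sub_nonneg.2 h₀⟩)
  obtain ⟨p, q, hp, hq, hpq, h_zero⟩ := h_zero
  have h_meet : p • (x₀, a₀) + q • (x₁, a₁) = p • (x₀, b₀) + q • (x₁, b₁) := by
    simp only [smul_eq_mul] at h_zero
    ext
    · simp
    · simp only [Prod.snd_add, Prod.smul_snd, smul_eq_mul]
      linear_combination -h_zero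
  exact ⟨_, hs ha₀ ha₁ hp hq hpq, h_meet ▸ ht hb₀ hb₁ hp hq hpq⟩

lemma lt_of_disjoint_of_convex {s t : Set (𝕜 × 𝕜)} (hs : Convex 𝕜 s) (ht : Convex 𝕜 t)
    (hst : Disjoint s t) {x₀ x₁ a₀ a₁ b₀ b₁ : 𝕜} (ha₀ : (x₀, a₀) ∈ s) (ha₁ : (x₁, a₁) ∈ s)
    (hb₀ : (x₀, b₀) ∈ t) (hb₁ : (x₁, b₁) ∈ t) (h₀ : a₀ ≤ b₀) : a₁ < b₁ := by
  by_contra! h₁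
  exact (inter_nonempty_of_convex_of_crossing hs ht ha₀ ha₁ hb₀ hb₁ h₀ h₁).not_disjoint hst

/-- On the vertical line at `x₀` the set `s` lies between `s₁` and `s₂`, hence by disjointness it
does so on every vertical line through `t`. -/
lemma inter_nonempty_of_between {s₁ s s₂ t : Set (𝕜 × 𝕜)} (hs₁ : Convex 𝕜 s₁) (hs : Convex 𝕜 s)
    (hs₂ : Convex 𝕜 s₂) (ht : Convex 𝕜 t) (hdisj₁ : Disjoint s₁ s) (hdisj₂ : Disjoint s s₂)
    (hspan : Prod.fst '' t ⊆ Prod.fst '' s) {x₀ y₁ y y₂ : 𝕜} (hy₁ : (x₀, y₁) ∈ s₁)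
    (hy : (x₀, y) ∈ s) (hy₂ : (x₀, y₂) ∈ s₂) (hle₁ : y₁ ≤ y) (hle₂ : y ≤ y₂)
    (ht₁ : (s₁ ∩ t).Nonempty) (ht₂ : (s₂ ∩ t).Nonempty) : (s ∩ t).Nonempty := by
  obtain ⟨⟨u, a⟩, hua, hua_t⟩ := ht₁
  obtain ⟨⟨v, b⟩, hvb, hvb_t⟩ := ht₂
  obtain ⟨⟨u, a'⟩, hua', rfl⟩ := hspan ⟨_, hua_t, rfl⟩
  obtain ⟨⟨v, b'⟩, hvb', rfl⟩ := hspan ⟨_, hvb_t, rfl⟩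
  have h_above : a < a' := lt_of_disjoint_of_convex hs₁ hs hdisj₁ hy₁ hua hy hua' hle₁
  have h_below : b' < b := lt_of_disjoint_of_convex hs hs₂ hdisj₂ hy hvb' hy₂ hvb hle₂
  rw [Set.inter_comm]
  exact inter_nonempty_of_convex_of_crossing ht hs hua_t hvb_t hua' hvb' h_above.le h_below.le

variable [Fintype α] [Fintype β] {A : α → Set (𝕜 × 𝕜)} {B : β → Set (𝕜 × 𝕜)} {d : ℕ}

lemma hasBicliqueCover_inter_of_spanning (hA : ∀ a, Convex 𝕜 (A a)) (hB : ∀ b, Convex 𝕜 (B b))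
    (hdisj : Pairwise (Disjoint on A))
    (hspan : ∀ a b, Prod.fst '' B b ⊆ Prod.fst '' A a)
    (hd : 2 * (Fintype.card α + Fintype.card β) < 2 ^ d) :
    HasBicliqueCover (fun a b => (A a ∩ B b).Nonempty)
      (8 * d * (Fintype.card α + Fintype.card β)) := by
  by_cases h_ne : ∃ b, (B b).Nonempty
  swap
  · have h_empty (b) : B b = ∅ := Set.not_nonempty_iff_eq_empty.1 fun hb => h_ne ⟨b, hb⟩
    exact HasBicliqueCover.of_fintype (κ := Empty) nofun nofun nofun (by simp [h_empty]) (by simp)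
  obtain ⟨b₀, ⟨x₀, y₀⟩, hb₀⟩ := h_ne
  have h_fibre (a) : ∃ y, (x₀, y) ∈ A a := by simpa using hspan a b₀ ⟨_, hb₀, rfl⟩
  choose y hy using h_fibre
  let heights (b : β) : Set 𝕜 := y '' {a | (A a ∩ B b).Nonempty}
  let run (b : β) : Set 𝕜 := upperClosure (heights b) ∩ lowerClosure (heights b)
  have h_run (b) : (run b).OrdConnected :=
    (upperClosure _).upper.ordConnected.inter (lowerClosure _).lower.ordConnected
  refine (hasBicliqueCover_inter_of_ordConnected (I := fun a => {y a}) (J := run)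
    (fun _ => Set.ordConnected_singleton) h_run hd).congr fun a b => ?_
  rw [Set.singleton_inter_nonempty]
  constructor
  · rintro ⟨⟨_, ⟨a₁, h₁, rfl⟩, hle₁⟩, ⟨_, ⟨a₂, h₂, rfl⟩, hle₂⟩⟩
    rcases eq_or_ne a₁ a with rfl | hne₁
    · exact h₁
    rcases eq_or_ne a a₂ with rfl | hne₂
    · exact h₂
    exact inter_nonempty_of_between (hA a₁) (hA a) (hA a₂) (hB b) (hdisj hne₁) (hdisj hne₂)
      (hspan a b) (hy a₁) (hy a) (hy a₂) hle₁ hle₂ h₁ h₂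
  · intro h
    have h_mem : y a ∈ heights b := Set.mem_image_of_mem y h
    exact ⟨subset_upperClosure h_mem, subset_lowerClosure h_mem⟩

lemma hasBicliqueCover_inter_slab (hA : ∀ a, Convex 𝕜 (A a)) (hB : ∀ b, Convex 𝕜 (B b))
    (hdisj : Pairwise (Disjoint on A)) {Y : Set 𝕜} (hY : Y.OrdConnected)
    (hspan : ∀ a, Y ⊆ Prod.fst '' A a)
    (hd : 2 * (Fintype.card α + Fintype.card β) < 2 ^ d) :
    HasBicliqueCover (fun a b => (A a ∩ B b ∩ Prod.fst ⁻¹' Y).Nonempty)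
      (8 * d * (Fintype.card α + Fintype.card β)) := by
  have h_slab : Convex 𝕜 (Prod.fst ⁻¹' Y : Set (𝕜 × 𝕜)) :=
    hY.convex.linear_preimage (LinearMap.fst 𝕜 𝕜 𝕜)
  refine (hasBicliqueCover_inter_of_spanning (A := fun a => A a ∩ Prod.fst ⁻¹' Y)
    (B := fun b => B b ∩ Prod.fst ⁻¹' Y) (fun a => (hA a).inter h_slab)
    (fun b => (hB b).inter h_slab)
    (fun a a' hne => (hdisj hne).mono Set.inter_subset_left Set.inter_subset_left)
    (fun a b => ?_) hd).congr fun a b => ?_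
  · rw [Set.image_inter_preimage, Set.image_inter_preimage]
    exact fun x hx => ⟨hspan a hx.2, hx.2⟩
  · rw [← Set.inter_inter_distrib_right]

lemma hasBicliqueCover_inter_of_convex (hA : ∀ a, Convex 𝕜 (A a)) (hB : ∀ b, Convex 𝕜 (B b))
    (hAdisj : Pairwise (Disjoint on A))
    (hBdisj : Pairwise (Disjoint on B))
    (hd : 2 * (Fintype.card α + Fintype.card β) < 2 ^ d) :
    HasBicliqueCover (fun a b => (A a ∩ B b).Nonempty)
      (64 * d ^ 2 * (Fintype.card α + Fintype.card β)) := by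
  have h_proj {s : Set (𝕜 × 𝕜)} (hs : Convex 𝕜 s) : (Prod.fst '' s).OrdConnected :=
    (hs.linear_image (LinearMap.fst 𝕜 𝕜 𝕜)).ordConnected
  have h_card (S : Finset α) (T : Finset β) :
      2 * (Fintype.card S + Fintype.card T) < 2 ^ d := by
    rw [Fintype.card_coe, Fintype.card_coe]
    have := S.card_le_univ
    have := T.card_le_univ
    omega
  refine (hasBicliqueCover_inter_of_slab Prod.fst (c := 8 * d) (fun a => h_proj (hA a))
    (fun b => h_proj (hB b)) hd (fun Y S T hY hS => ?_) (fun Y S T hY hT => ?_)).mono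
    (le_of_eq (by ring))
  · simpa using hasBicliqueCover_inter_slab (A := fun a : S => A a) (B := fun b : T => B b)
      (fun a => hA a) (fun b => hB b) (fun a a' hne => hAdisj (Subtype.coe_injective.ne hne)) hY
      (fun a => hS a a.2) (h_card S T)
  · simpa [Set.inter_comm, add_comm] using (hasBicliqueCover_inter_slab (A := fun b : T => B b)
      (B := fun a : S => A a) (fun b => hB b) (fun a => hA a)
      (fun b b' hne => hBdisj (Subtype.coe_injective.ne hne)) hY (fun b => hT b b.2)
      (by simpa [add_comm] using h_card S T)).swap

end Convex

lemma one_le_logb_two_natCast {n : ℕ} (hn : 2 ≤ n) : 1 ≤ Real.logb 2 n := by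
  rw [Real.le_logb_iff_rpow_le one_lt_two (by positivity), Real.rpow_one]
  exact_mod_cast hn

theorem stmt_16_general {𝕜 α β : Type*} [Field 𝕜] [LinearOrder 𝕜] [IsStrictOrderedRing 𝕜]
    [Fintype α] [Fintype β] {n : ℕ} (hn : 2 ≤ n) (hα : Fintype.card α ≤ n)
    (hβ : Fintype.card β ≤ n) {red : α → Set (𝕜 × 𝕜)} {blue : β → Set (𝕜 × 𝕜)}
    (hred : ∀ i, Convex 𝕜 (red i)) (hblue : ∀ j, Convex 𝕜 (blue j))
    (hred_disj : Pairwise (Disjoint on red))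
    (hblue_disj : Pairwise (Disjoint on blue)) {G : SimpleGraph (α ⊕ β)}
    (hG : ∀ i j, G.Adj (.inl i) (.inr j) ↔ (red i ∩ blue j).Nonempty)
    (hGred : ∀ i i', ¬ G.Adj (.inl i) (.inl i')) (hGblue : ∀ j j', ¬ G.Adj (.inr j) (.inr j')) :
    ∃ (m : ℕ) (A B : Fin m → Finset (α ⊕ β)), IsBicliqueCover G A B ∧
      (coverSize A B : ℝ) ≤ 2048 * n * Real.logb 2 n ^ 2 := by
  have hd : 2 * (Fintype.card α + Fintype.card β) < 2 ^ (Nat.log 2 n + 3) := by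
    have := Nat.lt_pow_succ_log_self one_lt_two n
    rw [Nat.succ_eq_add_one, pow_succ] at this
    rw [pow_add]
    omega
  obtain ⟨m, A, B, hAB, h_size⟩ := (hasBicliqueCover_inter_of_convex hred hblue hred_disj
    hblue_disj hd).exists_isBicliqueCover hG hGred hGblue
  refine ⟨m, A, B, hAB, ?_⟩
  have h_log : (Nat.log 2 n : ℝ) ≤ Real.logb 2 n := mod_cast Real.natLog_le_logb n 2
  have h_one := one_le_logb_two_natCast hn
  calc (coverSize A B : ℝ)
      ≤ 64 * ((Nat.log 2 n : ℝ) + 3) ^ 2 * (Fintype.card α + Fintype.card β) :=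
        mod_cast h_size
    _ ≤ 64 * (4 * Real.logb 2 n) ^ 2 * (n + n) := by gcongr; linarith
    _ = 2048 * n * Real.logb 2 n ^ 2 := by ring

/-- The bipartite intersection graph between at most `n` pairwise disjoint red
segments and at most `n` pairwise disjoint blue segments in the plane admits a
biclique cover of size `O(n (log₂ n)³)`. -/
theorem stmt_16 :
    ∃ C : ℝ, 0 < C ∧ ∀ n : ℕ, 2 ≤ n → ∀ nr nb : ℕ, nr ≤ n → nb ≤ n →
      ∀ (red : Fin nr → Set (ℝ × ℝ)) (blue : Fin nb → Set (ℝ × ℝ)),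
      (∀ i, ∃ p q : ℝ × ℝ, red i = segment ℝ p q) →
      (∀ i, ∃ p q : ℝ × ℝ, blue i = segment ℝ p q) →
      (∀ i j, i ≠ j → red i ∩ red j = ∅) →
      (∀ i j, i ≠ j → blue i ∩ blue j = ∅) →
      ∀ G : SimpleGraph (Fin nr ⊕ Fin nb),
      (∀ i j, G.Adj (.inl i) (.inr j) ↔ (red i ∩ blue j).Nonempty) →
      (∀ i j, ¬ G.Adj (.inl i) (.inl j)) →
      (∀ i j, ¬ G.Adj (.inr i) (.inr j)) →
      ∃ (m : ℕ) (A B : Fin m → Finset (Fin nr ⊕ Fin nb)),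
        IsBicliqueCover G A B ∧
        (coverSize A B : ℝ) ≤ C * (n : ℝ) * (Real.logb 2 n) ^ 3 := by
  refine ⟨2048, by norm_num, fun n hn nr nb hnr hnb red blue hred hblue hred_disj hblue_disj
    G hG hGred hGblue => ?_⟩
  have h_convex {s : Set (ℝ × ℝ)} : (∃ p q : ℝ × ℝ, s = segment ℝ p q) → Convex ℝ s := by
    rintro ⟨p, q, rfl⟩
    exact convex_segment p q
  obtain ⟨m, A, B, hAB, h_size⟩ := stmt_16_general hn (by simpa using hnr) (by simpa using hnb)
    (fun i => h_convex (hred i)) (fun j => h_convex (hblue j))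
    (fun i i' hne => Set.disjoint_iff_inter_eq_empty.2 (hred_disj i i' hne))
    (fun j j' hne => Set.disjoint_iff_inter_eq_empty.2 (hblue_disj j j' hne)) hG hGred hGblue
  refine ⟨m, A, B, hAB, h_size.trans ?_⟩
  gcongr
  exacts [one_le_logb_two_natCast hn, by norm_num]
end

section
/- For every integer k ≥ 1 there exists a constant C_k > 0 such that for all n ≥ 2 the following holds. Let a_1, …, a_k ∈ ℝ^d be fixed vectors, and let P be a family of n nonempty sets in ℝ^d, each of the form ⋂_{i=1}^{k} {x ∈ ℝ^d : ⟨a_i, x⟩ ≤ c_i} for some reals c_1, …, c_k (i.e., each set is a polytope cut out by translates of the k fixed halfspaces). Then the intersection graph of P admits a biclique cover of size at most C_k · n · (log₂ n)^k. -/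
open Finset

/-- A cover of the pairs of `X × Y` related by `R`, and of no others, by products `A i × B i` of
total size at most `t * (#X + #Y)`; so `t` bounds the cost per vertex. It is the bipartite form of a
biclique cover: the two vertex types may differ, and when they agree the sides of a product may
overlap. -/
def HasCover {U V : Type*} (R : U → V → Prop) (X : Finset U) (Y : Finset V) (t : ℕ) : Prop :=
  ∃ (m : ℕ) (A : Fin m → Finset U) (B : Fin m → Finset V),
    (∀ i, A i ⊆ X ∧ B i ⊆ Y) ∧
    (∀ u ∈ X, ∀ v ∈ Y, R u v ↔ ∃ i, u ∈ A i ∧ v ∈ B i) ∧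
    ∑ i, (#(A i) + #(B i)) ≤ t * (#X + #Y)

namespace HasCover

variable {U V : Type*} {R R' : U → V → Prop} {X : Finset U} {Y : Finset V} {s t : ℕ}

lemma of_fintype {ι : Type*} [Fintype ι] (A : ι → Finset U) (B : ι → Finset V)
    (hsub : ∀ i, A i ⊆ X ∧ B i ⊆ Y)
    (hR : ∀ u ∈ X, ∀ v ∈ Y, R u v ↔ ∃ i, u ∈ A i ∧ v ∈ B i)
    (hsize : ∑ i, (#(A i) + #(B i)) ≤ t * (#X + #Y)) : HasCover R X Y t := by
  let e := (Fintype.equivFin ι).symm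
  refine ⟨_, A ∘ e, B ∘ e, fun i => hsub (e i), fun u hu v hv => ?_, ?_⟩
  · exact (hR u hu v hv).trans (e.exists_congr_right (q := fun i => u ∈ A i ∧ v ∈ B i)).symm
  · exact (e.sum_comp fun i => #(A i) + #(B i)).trans_le hsize

lemma mono (h : HasCover R X Y s) (hst : s ≤ t) : HasCover R X Y t := by
  obtain ⟨m, A, B, hsub, hR, hsize⟩ := h
  exact ⟨m, A, B, hsub, hR, hsize.trans (Nat.mul_le_mul_right _ hst)⟩

lemma congr (h : HasCover R X Y t) (hRR' : ∀ u ∈ X, ∀ v ∈ Y, (R' u v ↔ R u v)) :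
    HasCover R' X Y t := by
  obtain ⟨m, A, B, hsub, hR, hsize⟩ := h
  exact ⟨m, A, B, hsub, fun u hu v hv => (hRR' u hu v hv).trans (hR u hu v hv), hsize⟩

lemma empty_left : HasCover R ∅ Y t :=
  ⟨0, Fin.elim0, Fin.elim0, by simp, by simp, by simp⟩

lemma swap (h : HasCover R X Y t) : HasCover (fun v u => R u v) Y X t := by
  obtain ⟨m, A, B, hsub, hR, hsize⟩ := h
  refine ⟨m, B, A, fun i => (hsub i).symm, fun v hv u hu => ?_, ?_⟩
  · simp only [hR u hu v hv, and_comm]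
  · simpa only [add_comm] using hsize

lemma or (h : HasCover R X Y s) (h' : HasCover R' X Y t) :
    HasCover (fun u v => R u v ∨ R' u v) X Y (s + t) := by
  obtain ⟨m, A, B, hsub, hR, hsize⟩ := h
  obtain ⟨m', A', B', hsub', hR', hsize'⟩ := h'
  refine of_fintype (Sum.elim A A') (Sum.elim B B') (Sum.forall.2 ⟨hsub, hsub'⟩)
    (fun u hu v hv => ?_) ?_
  · simp only [hR u hu v hv, hR' u hu v hv, Sum.exists, Sum.elim_inl, Sum.elim_inr]
  · simp only [Fintype.sum_sum_type, Sum.elim_inl, Sum.elim_inr]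
    linarith

lemma exists_index {κ : Type*} [Fintype κ] {R : κ → U → V → Prop}
    (h : ∀ q, HasCover (R q) X Y t) :
    HasCover (fun u v => ∃ q, R q u v) X Y (Fintype.card κ * t) := by
  choose m A B hsub hR hsize using h
  refine of_fintype (ι := Σ q, Fin (m q)) (fun i => A i.1 i.2) (fun i => B i.1 i.2)
    (fun i => hsub i.1 i.2) (fun u hu v hv => ?_) ?_
  · simp only [hR _ u hu v hv, Sigma.exists]
  · calc ∑ i : Σ q, Fin (m q), (#(A i.1 i.2) + #(B i.1 i.2))
        = ∑ q, ∑ i, (#(A q i) + #(B q i)) := Fintype.sum_sigma _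
      _ ≤ ∑ _q : κ, t * (#X + #Y) := sum_le_sum fun q _ => hsize q
      _ = Fintype.card κ * t * (#X + #Y) := by simp [mul_assoc]

/-- Only products on which `R` holds throughout matter for `R'`: refine each product of a cover
of `R`. -/
lemma and_of_complete (h : HasCover R X Y s)
    (h' : ∀ A ⊆ X, ∀ B ⊆ Y, (∀ u ∈ A, ∀ v ∈ B, R u v) → HasCover R' A B t) :
    HasCover (fun u v => R u v ∧ R' u v) X Y (s * t) := by
  obtain ⟨m, A, B, hsub, hR, hsize⟩ := h
  have hcomplete (i : Fin m) : ∀ u ∈ A i, ∀ v ∈ B i, R u v := fun u hu v hv =>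
    (hR u ((hsub i).1 hu) v ((hsub i).2 hv)).2 ⟨i, hu, hv⟩
  choose m' A' B' hsub' hR' hsize' using fun i =>
    h' (A i) (hsub i).1 (B i) (hsub i).2 (hcomplete i)
  refine of_fintype (ι := Σ i, Fin (m' i)) (fun i => A' i.1 i.2) (fun i => B' i.1 i.2)
    (fun i => ⟨(hsub' i.1 i.2).1.trans (hsub i.1).1, (hsub' i.1 i.2).2.trans (hsub i.1).2⟩)
    (fun u hu v hv => ⟨?_, ?_⟩) ?_
  · rintro ⟨huv, huv'⟩
    obtain ⟨i, hui, hvi⟩ := (hR u hu v hv).1 huv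
    obtain ⟨j, hj⟩ := (hR' i u hui v hvi).1 huv'
    exact ⟨⟨i, j⟩, hj⟩
  · rintro ⟨⟨i, j⟩, huj, hvj⟩
    have hui := (hsub' i j).1 huj
    have hvi := (hsub' i j).2 hvj
    exact ⟨hcomplete i u hui v hvi, (hR' i u hui v hvi).2 ⟨j, huj, hvj⟩⟩
  · calc ∑ i : Σ i, Fin (m' i), (#(A' i.1 i.2) + #(B' i.1 i.2))
        = ∑ i, ∑ j, (#(A' i j) + #(B' i j)) := Fintype.sum_sigma _
      _ ≤ ∑ i, t * (#(A i) + #(B i)) := sum_le_sum fun i _ => hsize' i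
      _ = t * ∑ i, (#(A i) + #(B i)) := (mul_sum ..).symm
      _ ≤ t * (s * (#X + #Y)) := Nat.mul_le_mul_left _ hsize
      _ = s * t * (#X + #Y) := by ring

lemma of_mem {L : Type*} (f : U → L) (g : V → Finset L) (ht : 1 ≤ t)
    (hg : ∀ v ∈ Y, #(g v) ≤ t) : HasCover (fun u v => f u ∈ g v) X Y t := by
  classical
  refine of_fintype (ι := X.image f) (fun l => {u ∈ X | f u = l}) (fun l => {v ∈ Y | l.1 ∈ g v})
    (fun l => ⟨filter_subset _ _, filter_subset _ _⟩) (fun u hu v hv => ?_) ?_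
  · have hfu : ∃ w ∈ X, f w = f u := ⟨u, hu, rfl⟩
    simp [hu, hv, hfu]
  · have hX : ∑ l ∈ X.image f, #{u ∈ X | f u = l} = #X := (card_eq_sum_card_image f X).symm
    have hY : ∑ l ∈ X.image f, #{v ∈ Y | l ∈ g v} ≤ #Y * t :=
      calc ∑ l ∈ X.image f, #{v ∈ Y | l ∈ g v}
          = ∑ v ∈ Y, #{l ∈ X.image f | l ∈ g v} :=
            sum_card_bipartiteAbove_eq_sum_card_bipartiteBelow _
        _ ≤ #Y * t := sum_le_card_nsmul _ _ _ fun v hv =>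
            (card_le_card fun l hl => (mem_filter.1 hl).2).trans (hg v hv)
    rw [sum_coe_sort (X.image f) fun l => #{u ∈ X | f u = l} + #{v ∈ Y | l ∈ g v},
      sum_add_distrib, hX]
    nlinarith

lemma of_right (Q : V → Prop) : HasCover (fun (_ : U) v => Q v) X Y 1 := by
  classical
  refine (of_mem (fun _ => ()) (fun v => if Q v then {()} else ∅) le_rfl
    fun v _ => ?_).congr fun u _ v _ => ?_
  · split_ifs <;> simp
  · split_ifs with hQ <;> simp [hQ]

lemma of_eq {L : Type*} (f : U → L) (g : V → L) : HasCover (fun u v => f u = g v) X Y 1 := by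
  simpa only [mem_singleton] using
    of_mem (X := X) (Y := Y) f (fun v => {g v}) le_rfl fun v _ => (card_singleton _).le

/-- Two vertices are distinct iff their binary encodings disagree on some bit. -/
lemma of_ne_and_eq {L : Type*} [Fintype V] {X Y : Finset V} {K : ℕ}
    (hK : Fintype.card V ≤ 2 ^ K) (c : V → L) :
    HasCover (fun u v => u ≠ v ∧ c u = c v) X Y K := by
  obtain ⟨e⟩ : Nonempty (V ↪ (Fin K → Bool)) :=
    Function.Embedding.nonempty_of_card_le (by simpa using hK)
  have hbit (q : Fin K) : HasCover (fun u v => (c u, e u q) = (c v, !e v q)) X Y 1 :=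
    of_eq (fun u => (c u, e u q)) fun v => (c v, !e v q)
  refine ((exists_index hbit).congr fun u _ v _ => ?_).mono (by simp)
  simp only [← e.injective.ne_iff, Function.ne_iff, Prod.mk.injEq, Bool.eq_not, exists_and_left,
    and_comm]

end HasCover

/-- The dyadic cell `[i * 2 ^ e, (i + 1) * 2 ^ e)` lies in the interval `[β, τ)`. -/
def DyadicCellIn (β τ e i : ℕ) : Prop :=
  β ≤ i * 2 ^ e ∧ (i + 1) * 2 ^ e ≤ τ

/-- The cells of level `e` that a segment tree stores for `[β, τ)`: those contained in it while the
cell of level `e + 1` around them is not. -/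
noncomputable def canonicalCells (β τ e : ℕ) : Finset ℕ :=
  open scoped Classical in
  {i ∈ range τ | DyadicCellIn β τ e i ∧ ¬ DyadicCellIn β τ (e + 1) (i / 2)}

lemma DyadicCellIn.lt {β τ e i : ℕ} (h : DyadicCellIn β τ e i) : i < τ :=
  calc i < i + 1 := i.lt_succ_self
    _ ≤ (i + 1) * 2 ^ e := Nat.le_mul_of_pos_right _ (by positivity)
    _ ≤ τ := h.2

lemma mem_canonicalCells {β τ e i : ℕ} :
    i ∈ canonicalCells β τ e ↔ DyadicCellIn β τ e i ∧ ¬ DyadicCellIn β τ (e + 1) (i / 2) := by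
  simp only [canonicalCells, mem_filter, mem_range, and_iff_right_iff_imp]
  exact fun h => h.1.lt

/-- Of three cells in the interval, the middle one has its sibling between the outer two, so its
parent is in the interval as well. -/
lemma dyadicCellIn_parent_of_lt_of_lt {β τ e i j l : ℕ} (hi : DyadicCellIn β τ e i)
    (hl : DyadicCellIn β τ e l) (hij : i < j) (hjl : j < l) :
    DyadicCellIn β τ (e + 1) (j / 2) := by
  have hpow : 2 ^ (e + 1) = 2 * 2 ^ e := by ring
  rw [DyadicCellIn, hpow, ← mul_assoc, ← mul_assoc]
  exact ⟨hi.1.trans (Nat.mul_le_mul_right _ (by omega)),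
    (Nat.mul_le_mul_right _ (by omega)).trans hl.2⟩

lemma card_canonicalCells_le_two (β τ e : ℕ) : #(canonicalCells β τ e) ≤ 2 := by
  rcases (canonicalCells β τ e).eq_empty_or_nonempty with h | h
  · simp [h]
  set i := (canonicalCells β τ e).min' h
  set l := (canonicalCells β τ e).max' h
  have hi : DyadicCellIn β τ e i := (mem_canonicalCells.1 (min'_mem _ h)).1
  have hl : DyadicCellIn β τ e l := (mem_canonicalCells.1 (max'_mem _ h)).1
  have hsub : canonicalCells β τ e ⊆ {i, l} := by
    intro j hj
    by_contra hne
    simp only [mem_insert, mem_singleton, not_or] at hne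
    exact (mem_canonicalCells.1 hj).2 (dyadicCellIn_parent_of_lt_of_lt hi hl
      (lt_of_le_of_ne (min'_le _ _ hj) (Ne.symm hne.1)) (lt_of_le_of_ne (le_max' _ _ hj) hne.2))
  exact (card_le_card hsub).trans card_le_two

lemma mem_Ico_of_dyadicCellIn_div {β τ e r : ℕ} (h : DyadicCellIn β τ e (r / 2 ^ e)) :
    r ∈ Set.Ico β τ :=
  ⟨h.1.trans (Nat.div_mul_le_self _ _),
    lt_of_lt_of_le ((Nat.div_lt_iff_lt_mul (by positivity)).1 (Nat.lt_succ_self _)) h.2⟩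

/-- The cells containing `r` grow with the level; the last one inside `[β, τ)` is canonical. -/
lemma mem_Ico_iff_exists_mem_canonicalCells {β τ r K : ℕ} (hτ : τ ≤ 2 ^ K) :
    r ∈ Set.Ico β τ ↔ ∃ e : Fin (K + 1), r / 2 ^ (e : ℕ) ∈ canonicalCells β τ e := by
  classical
  refine ⟨fun hr => ?_, fun ⟨e, he⟩ =>
    mem_Ico_of_dyadicCellIn_div (mem_canonicalCells.1 he).1⟩
  let P (e : ℕ) : Prop := DyadicCellIn β τ e (r / 2 ^ e)
  have hP_zero : P 0 := by simpa [P, DyadicCellIn] using hr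
  have hP_top : ¬ P (K + 1) := fun h => by
    have hcell : 2 ^ (K + 1) ≤ τ := (Nat.le_mul_of_pos_left _ (Nat.succ_pos _)).trans h.2
    exact absurd (hcell.trans hτ) (not_le.2 (Nat.pow_lt_pow_right one_lt_two K.lt_succ_self))
  set e := Nat.findGreatest P K
  have hP : P e := Nat.findGreatest_spec K.zero_le hP_zero
  have heK : e ≤ K := Nat.findGreatest_le K
  have hP_succ : ¬ P (e + 1) := by
    rcases heK.eq_or_lt with h | h
    · rwa [h]
    · exact Nat.findGreatest_is_greatest e.lt_succ_self h
  refine ⟨⟨e, Nat.lt_succ_of_le heK⟩, mem_canonicalCells.2 ⟨hP, ?_⟩⟩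
  rwa [Nat.div_div_eq_div_mul, ← pow_succ]

lemma card_filter_lt_le_card_filter_lt_iff {α : Type*} [LinearOrder α] {s : Finset α} {a : α}
    (ha : a ∈ s) (b : α) : #{i ∈ s | i < b} ≤ #{i ∈ s | i < a} ↔ b ≤ a := by
  refine ⟨fun h => ?_, fun h => card_le_card (monotone_filter_right s fun i _ hi => hi.trans_le h)⟩
  contrapose! h
  refine card_lt_card ((ssubset_iff_of_subset
    (monotone_filter_right s fun i _ hi => hi.trans h)).2 ⟨a, ?_, ?_⟩) <;> simp [ha, h]

lemma card_filter_lt_lt_card_filter_le_iff {α : Type*} [LinearOrder α] {s : Finset α} {a : α}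
    (ha : a ∈ s) (b : α) : #{i ∈ s | i < a} < #{i ∈ s | i ≤ b} ↔ a ≤ b := by
  refine ⟨fun h => ?_, fun h => card_lt_card ((ssubset_iff_of_subset
    (monotone_filter_right s fun i _ hi => hi.le.trans h)).2 ⟨a, ?_, ?_⟩)⟩
  · contrapose! h
    exact card_le_card (monotone_filter_right s fun i _ hi => hi.trans_lt h)
  all_goals simp [ha, h]

namespace HasCover

variable {U V : Type*} {X : Finset U} {Y : Finset V} {K : ℕ}

lemma mem_Ico_nat (ρ : U → ℕ) (β τ : V → ℕ) (hτ : ∀ v ∈ Y, τ v ≤ 2 ^ K) :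
    HasCover (fun u v => ρ u ∈ Set.Ico (β v) (τ v)) X Y (2 * (K + 1)) := by
  have hlevel (e : Fin (K + 1)) :
      HasCover (fun u v => ρ u / 2 ^ (e : ℕ) ∈ canonicalCells (β v) (τ v) e) X Y 2 :=
    of_mem (fun u => ρ u / 2 ^ (e : ℕ)) (fun v => canonicalCells (β v) (τ v) e) one_le_two
      fun v _ => card_canonicalCells_le_two _ _ _
  refine ((exists_index hlevel).congr fun u _ v hv => ?_).mono (by simp [mul_comm])
  exact mem_Ico_iff_exists_mem_canonicalCells (hτ v hv)

/-- Ranks among the points of `X` reduce the claim to natural numbers. -/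
lemma mem_Icc {α : Type*} [LinearOrder α] (hX : #X ≤ 2 ^ K) (x : U → α) (b t : V → α) :
    HasCover (fun u v => x u ∈ Set.Icc (b v) (t v)) X Y (2 * (K + 1)) := by
  refine (mem_Ico_nat (fun u => #{i ∈ X.image x | i < x u}) (fun v => #{i ∈ X.image x | i < b v})
    (fun v => #{i ∈ X.image x | i ≤ t v})
    fun v _ => (card_filter_le _ _).trans (card_image_le.trans hX)).congr fun u hu v _ => ?_
  have hxu : x u ∈ X.image x := mem_image_of_mem x hu
  simp only [Set.mem_Icc, Set.mem_Ico, card_filter_lt_le_card_filter_lt_iff hxu,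
    card_filter_lt_lt_card_filter_le_iff hxu]

/-- Two intervals meet iff one of them contains the left endpoint of the other. -/
lemma Icc_inter_Icc_nonempty {α : Type*} [LinearOrder α] (hX : #X ≤ 2 ^ K) (hY : #Y ≤ 2 ^ K)
    (l h : U → α) (b t : V → α) (hlh : ∀ u ∈ X, l u ≤ h u) (hbt : ∀ v ∈ Y, b v ≤ t v) :
    HasCover (fun u v => (Set.Icc (l u) (h u) ∩ Set.Icc (b v) (t v)).Nonempty) X Y
      (4 * (K + 1)) := by
  refine (((mem_Icc hX l b t).or (mem_Icc hY b l h).swap).congr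
    fun u hu v hv => ?_).mono (by ring_nf; rfl)
  rw [Set.Icc_inter_Icc, Set.nonempty_Icc]
  grind [hlh u hu, hbt v hv]

/-- With `w` minimizing `f - g` on `X`, the two comparisons say that the intervals
`[z u + g u, z u + f u - (f w - g w)]` and `[b v - (f w - g w), t v]` meet, and neither of these is
empty. -/
lemma mem_Icc_sub {𝕜 : Type*} [AddCommGroup 𝕜] [LinearOrder 𝕜] [IsOrderedAddMonoid 𝕜]
    (hX : #X ≤ 2 ^ K) (hY : #Y ≤ 2 ^ K) (z f g : U → 𝕜) (b t : V → 𝕜)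
    (hcompat : ∀ u ∈ X, ∀ v ∈ Y, b v - f u ≤ t v - g u) :
    HasCover (fun u v => z u ∈ Set.Icc (b v - f u) (t v - g u)) X Y (4 * (K + 1)) := by
  rcases X.eq_empty_or_nonempty with rfl | hne
  · exact empty_left
  obtain ⟨w, hw, hmin⟩ := X.exists_min_image (fun u => f u - g u) hne
  have hleft (u) (hu : u ∈ X) : z u + g u ≤ z u + f u - (f w - g w) := by
    have := hmin u hu
    grind
  have hright (v) (hv : v ∈ Y) : b v - (f w - g w) ≤ t v := by
    have := hcompat w hw v hv
    grind
  refine (Icc_inter_Icc_nonempty hX hY _ _ _ _ hleft hright).congr fun u hu v hv => ?_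
  rw [Set.Icc_inter_Icc, Set.nonempty_Icc]
  have := hleft u hu
  have := hright v hv
  grind

/-- Split according to which `i` gives the least upper bound and which `j` the greatest lower
bound. Once these choices and the compatibility of the two bounds are ensured, only the comparison
of `z` with two bounds that are in order for *all* pairs is left. -/
lemma and_forall_bounds {𝕜 : Type*} [AddCommGroup 𝕜] [LinearOrder 𝕜] [IsOrderedAddMonoid 𝕜]
    {I J : Type*} [Fintype I] [Nonempty I] [Fintype J] [Nonempty J] {s : ℕ}
    (hX : #X ≤ 2 ^ K) (hY : #Y ≤ 2 ^ K) (P : U → V → Prop) (z : U → 𝕜)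
    (g : I → U → 𝕜) (t : I → V → 𝕜) (f : J → U → 𝕜) (b : J → V → 𝕜)
    (hextremal : ∀ i j, HasCover (fun u v => P u v ∧ b j v - f j u ≤ t i v - g i u ∧
      (∀ i', t i v - g i u ≤ t i' v - g i' u) ∧ ∀ j', b j' v - f j' u ≤ b j v - f j u) X Y s) :
    HasCover (fun u v => P u v ∧ (∀ i, z u ≤ t i v - g i u) ∧ ∀ j, b j v - f j u ≤ z u) X Y
      (Fintype.card I * (Fintype.card J * (s * (4 * (K + 1))))) := by
  refine (exists_index fun i => exists_index fun j => (hextremal i j).and_of_complete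
    fun A hA B hB hAB => mem_Icc_sub ((card_le_card hA).trans hX) ((card_le_card hB).trans hY)
      z (f j) (g i) (b j) (t i) fun u hu v hv => (hAB u hu v hv).2.1).congr fun u _ v _ => ?_
  constructor
  · rintro ⟨hP, hup, hlo⟩
    obtain ⟨i, hi⟩ := Finite.exists_min fun i => t i v - g i u
    obtain ⟨j, hj⟩ := Finite.exists_max fun j => b j v - f j u
    exact ⟨i, j, ⟨hP, (hlo j).trans (hup i), hi, hj⟩, hlo j, hup i⟩
  · rintro ⟨i, j, ⟨hP, -, hi, hj⟩, hlo, hup⟩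
    exact ⟨hP, fun i' => hup.trans (hi i'), fun j' => (hj j').trans hlo⟩

end HasCover

section LinearSystem

universe w

variable {U V 𝕜 : Type*} {X : Finset U} {Y : Finset V} {K : ℕ}
  [Field 𝕜] [LinearOrder 𝕜] [IsStrictOrderedRing 𝕜]

/-- The index `none` stands for bounds `z u ≤ M` and `-M ≤ z u`, valid on `X`: they make sure that
both kinds of bounds occur. -/
lemma exists_forall_mul_add_le_iff_bounds {J : Type*} (X : Finset U) (z : U → 𝕜) (α : J → 𝕜)
    (ψ : J → U → 𝕜) (y : J → V → 𝕜) {W : Submodule 𝕜 (U → 𝕜)} (hψ : ∀ j, ψ j ∈ W) :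
    ∃ (g : Option {j // 0 < α j} → U → 𝕜) (t : Option {j // 0 < α j} → V → 𝕜)
      (f : Option {j // α j < 0} → U → 𝕜) (b : Option {j // α j < 0} → V → 𝕜),
      (∀ i, g i ∈ W) ∧ (∀ i, f i ∈ W) ∧ ∀ u ∈ X, ∀ v, (∀ j, α j * z u + ψ j u ≤ y j v) ↔
        (∀ j : {j // α j = 0}, ψ j u ≤ y j v) ∧
        (∀ i, z u ≤ t i v - g i u) ∧ ∀ i, b i v - f i u ≤ z u := by
  classical
  obtain ⟨M, hM⟩ := (X.image fun u => |z u|).exists_le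
  refine ⟨fun i => i.elim 0 fun j => (α j)⁻¹ • ψ j, fun i => i.elim (fun _ => M)
    fun j v => (α j)⁻¹ * y j v, fun i => i.elim 0 fun j => (α j)⁻¹ • ψ j,
    fun i => i.elim (fun _ => -M) fun j v => (α j)⁻¹ * y j v, ?_, ?_, fun u hu v => ?_⟩
  · exact Option.forall.2 ⟨W.zero_mem, fun j => W.smul_mem _ (hψ j)⟩
  · exact Option.forall.2 ⟨W.zero_mem, fun j => W.smul_mem _ (hψ j)⟩
  obtain ⟨hM_neg, hM_pos⟩ := abs_le.1 (hM _ (mem_image_of_mem _ hu))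
  have hup (j) (hj : 0 < α j) : z u ≤ (α j)⁻¹ * (y j v - ψ j u) ↔ α j * z u + ψ j u ≤ y j v := by
    rw [le_inv_mul_iff₀ hj, le_sub_iff_add_le]
  have hlo (j) (hj : α j < 0) : (α j)⁻¹ * (y j v - ψ j u) ≤ z u ↔ α j * z u + ψ j u ≤ y j v := by
    rw [mul_comm, ← div_eq_mul_inv, div_le_iff_of_neg hj, mul_comm, le_sub_iff_add_le]
  simp only [Option.forall, Option.elim, Pi.zero_apply, Pi.smul_apply, smul_eq_mul, sub_zero,
    hM_neg, hM_pos, true_and, Subtype.forall, ← mul_sub]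
  constructor
  · exact fun h => ⟨fun j hj => by simpa [hj] using h j, fun j hj => (hup j hj).2 (h j),
      fun j hj => (hlo j hj).2 (h j)⟩
  · rintro ⟨hzero, hpos, hneg⟩ j
    rcases lt_trichotomy (α j) 0 with hj | hj | hj
    · exact (hlo j hj).1 (hneg j hj)
    · simpa [hj] using hzero j hj
    · exact (hup j hj).1 (hpos j hj)

/-- That two bounds for `z` are extremal and compatible is again a system of comparisons of
functions in `W`. -/
lemma HasCover.forall_mul_add_le {J : Type w} [Fintype J] {m s : ℕ}
    (hX : #X ≤ 2 ^ K) (hY : #Y ≤ 2 ^ K) (hJ : Fintype.card J ≤ m) (W : Submodule 𝕜 (U → 𝕜))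
    (hW : ∀ ⦃J' : Type w⦄ [Fintype J'], Fintype.card J' ≤ 3 * m + 3 → ∀ φ : J' → U → 𝕜,
      (∀ j, φ j ∈ W) → ∀ y : J' → V → 𝕜, HasCover (fun u v => ∀ j, φ j u ≤ y j v) X Y s)
    (z : U → 𝕜) (α : J → 𝕜) (ψ : J → U → 𝕜) (hψ : ∀ j, ψ j ∈ W) (y : J → V → 𝕜) :
    HasCover (fun u v => ∀ j, α j * z u + ψ j u ≤ y j v) X Y
      ((m + 1) * ((m + 1) * (s * (4 * (K + 1))))) := by
  classical
  obtain ⟨g, t, f, b, hg, hf, hbounds⟩ := exists_forall_mul_add_le_iff_bounds X z α ψ y hψ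
  have hcard (Q : J → Prop) [DecidablePred Q] : Fintype.card {j // Q j} ≤ m :=
    (Fintype.card_subtype_le Q).trans hJ
  have hextremal (i j) : HasCover (fun u v => (∀ l : {l // α l = 0}, ψ l u ≤ y l v) ∧
      b j v - f j u ≤ t i v - g i u ∧ (∀ i', t i v - g i u ≤ t i' v - g i' u) ∧
      ∀ j', b j' v - f j' u ≤ b j v - f j u) X Y s := by
    let J' := Option ({l // α l = 0} ⊕ (Option {l // 0 < α l} ⊕ Option {l // α l < 0}))
    let φ : J' → U → 𝕜 := fun l => l.elim (g i - f j) (Sum.elim (fun l => ψ l)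
      (Sum.elim (fun i' => g i' - g i) fun j' => f j - f j'))
    let y' : J' → V → 𝕜 := fun l => l.elim (t i - b j) (Sum.elim (fun l => y l)
      (Sum.elim (fun i' => t i' - t i) fun j' => b j - b j'))
    have hJ' : Fintype.card J' ≤ 3 * m + 3 := by
      simp only [J', Fintype.card_option, Fintype.card_sum]
      linarith [hcard (α · = 0), hcard (0 < α ·), hcard (α · < 0)]
    have hφ : ∀ l, φ l ∈ W := Option.forall.2 ⟨W.sub_mem (hg i) (hf j), Sum.forall.2
      ⟨fun l => hψ l, Sum.forall.2 ⟨fun i' => W.sub_mem (hg i') (hg i),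
        fun j' => W.sub_mem (hf j) (hf j')⟩⟩⟩
    refine (hW hJ' φ hφ y').congr fun u _ v _ => ?_
    simp only [J', φ, y', Option.forall, Sum.forall, Option.elim, Sum.elim_inl, Sum.elim_inr,
      Pi.sub_apply]
    grind
  refine ((and_forall_bounds hX hY _ z g t f b hextremal).congr fun u hu v _ =>
    hbounds u hu v).mono ?_
  simp only [Fintype.card_option]
  gcongr <;> exact hcard _

/-- The constant in the cost of `m` linear comparisons on `r` coordinates. Eliminating a coordinate
leaves at most `(m + 1) ^ 2` choices of a pair of extremal bounds, and for each of them at most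
`3 * m + 3` comparisons on the other coordinates. -/
def linearCost : ℕ → ℕ → ℕ
  | 0, _ => 1
  | r + 1, m => (m + 1) * ((m + 1) * (linearCost r (3 * m + 3) * 4))

theorem HasCover.forall_le_of_mem_span {r : ℕ} (hX : #X ≤ 2 ^ K) (hY : #Y ≤ 2 ^ K)
    (z : Fin r → U → 𝕜) {m : ℕ} {J : Type*} [Fintype J] (hJ : Fintype.card J ≤ m) (φ : J → U → 𝕜)
    (hφ : ∀ j, φ j ∈ Submodule.span 𝕜 (Set.range z)) (y : J → V → 𝕜) :
    HasCover (fun u v => ∀ j, φ j u ≤ y j v) X Y (linearCost r m * (K + 1) ^ r) := by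
  induction r generalizing m J with
  | zero =>
    have hzero (j) : φ j = 0 := by simpa using hφ j
    simpa [hzero, linearCost] using of_right (X := X) (Y := Y) fun v => ∀ j, 0 ≤ y j v
  | succ r ih =>
    set W := Submodule.span 𝕜 (Set.range (Fin.tail z))
    have hdecomp (j) : ∃ α : 𝕜, ∃ ψ ∈ W, φ j = α • z 0 + ψ := by
      rw [← Submodule.mem_span_insert, ← Fin.range_cons, Fin.cons_self_tail]
      exact hφ j
    choose α ψ hψ hφ_eq using hdecomp
    refine ((forall_mul_add_le hX hY hJ W (fun _ _ hJ' φ' hφ' => ih (Fin.tail z) hJ' φ' hφ')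
      (z 0) α ψ hψ y).congr fun u _ v _ => ?_).mono (by rw [linearCost]; ring_nf; rfl)
    simp only [hφ_eq, Pi.add_apply, Pi.smul_apply, smul_eq_mul]

theorem HasCover.forall_dual_le {k : ℕ} (hX : #X ≤ 2 ^ K) (hY : #Y ≤ 2 ^ K)
    (p : U → Fin k → 𝕜) {J : Type*} [Fintype J] (φ : J → Module.Dual 𝕜 (Fin k → 𝕜))
    (y : J → V → 𝕜) :
    HasCover (fun u v => ∀ j, φ j (p u) ≤ y j v) X Y
      (linearCost k (Fintype.card J) * (K + 1) ^ k) := by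
  refine forall_le_of_mem_span hX hY (fun i u => p u i) le_rfl (fun j u => φ j (p u))
    (fun j => ?_) y
  have hcoord : (fun u => φ j (p u)) =
      ∑ i, φ j (fun l => if i = l then 1 else 0) • fun u => p u i := by
    ext u
    simp [(φ j).pi_apply_eq_sum_univ (p u), mul_comm]
  rw [hcoord]
  exact Submodule.sum_smul_mem _ _ fun i _ => Submodule.subset_span (Set.mem_range_self i)

end LinearSystem

lemma exists_span_range_eq {ι 𝕜 E : Type*} [DivisionRing 𝕜] [AddCommGroup E] [Module 𝕜 E]
    (b : Module.Basis ι 𝕜 E) (W : Submodule 𝕜 E) :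
    ∃ w : ι → E, Submodule.span 𝕜 (Set.range w) = W := by
  obtain ⟨W', hW⟩ := W.exists_isCompl
  refine ⟨W.projection W' hW ∘ b, ?_⟩
  rw [Set.range_comp, Submodule.span_image, b.span_eq, Submodule.map_top,
    Submodule.range_projection]

section FourierMotzkin

variable {𝕜 E : Type*} [Field 𝕜] [LinearOrder 𝕜] [IsStrictOrderedRing 𝕜]
  [AddCommGroup E] [Module 𝕜 E]

lemma exists_forall_le_and_forall_le {α : Type*} [LinearOrder α] [Nonempty α] {s t : Finset α}
    (h : ∀ a ∈ s, ∀ b ∈ t, a ≤ b) : ∃ x, (∀ a ∈ s, a ≤ x) ∧ ∀ b ∈ t, x ≤ b := by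
  rcases s.eq_empty_or_nonempty with rfl | hs
  · obtain ⟨x, hx⟩ := t.bddBelow
    exact ⟨x, by simp, fun b hb => hx hb⟩
  · exact ⟨s.max' hs, fun a ha => s.le_max' a ha, h _ (s.max'_mem hs)⟩

lemma exists_forall_add_mul_nonneg_iff {ι : Type*} [Finite ι] (α β : ι → 𝕜) :
    (∃ t, ∀ i, 0 ≤ β i + t * α i) ↔
      (∀ i, α i = 0 → 0 ≤ β i) ∧ ∀ i j, 0 < α i → α j < 0 → 0 ≤ α i * β j - α j * β i := by
  classical
  have := Fintype.ofFinite ι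
  constructor
  · rintro ⟨t, ht⟩
    refine ⟨fun i hi => by simpa [hi] using ht i, fun i j hi hj => ?_⟩
    calc 0 ≤ α i * (β j + t * α j) + -α j * (β i + t * α i) :=
          add_nonneg (mul_nonneg hi.le (ht j)) (mul_nonneg (neg_nonneg.2 hj.le) (ht i))
      _ = α i * β j - α j * β i := by ring
  · rintro ⟨hzero, hpair⟩
    obtain ⟨t, hlo, hup⟩ := exists_forall_le_and_forall_le
      (s := {i | 0 < α i}.toFinset.image fun i => -β i / α i)
      (t := {i | α i < 0}.toFinset.image fun i => -β i / α i) (by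
        simp only [forall_mem_image, Set.mem_toFinset, Set.mem_ofPred_eq]
        intro i hi j hj
        rw [div_le_iff₀ hi, div_mul_eq_mul_div, le_div_iff_of_neg hj]
        linarith [hpair i j hi hj])
    simp only [forall_mem_image, Set.mem_toFinset, Set.mem_ofPred_eq] at hlo hup
    refine ⟨t, fun i => ?_⟩
    rcases lt_trichotomy (α i) 0 with hi | hi | hi
    · linarith [(le_div_iff_of_neg hi).1 (hup hi)]
    · simpa [hi] using hzero i hi
    · linarith [(div_le_iff₀ hi).1 (hlo hi)]

lemma exists_dual_forall_nonneg_add_smul_iff {m : ℕ} (f : Fin m → Module.Dual 𝕜 E) (w : E) :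
    ∃ g : Fin (m + m * m) → Module.Dual 𝕜 E,
      ∀ x, (∃ t : 𝕜, ∀ i, 0 ≤ f i (x + t • w)) ↔ ∀ κ, 0 ≤ g κ x := by
  classical
  let g : Fin m ⊕ Fin m × Fin m → Module.Dual 𝕜 E :=
    Sum.elim (fun i => if f i w = 0 then f i else 0) fun p =>
      if 0 < f p.1 w ∧ f p.2 w < 0 then f p.1 w • f p.2 - f p.2 w • f p.1 else 0
  let e : Fin (m + m * m) ≃ Fin m ⊕ Fin m × Fin m := (Fintype.equivFinOfCardEq (by simp)).symm
  refine ⟨g ∘ e, fun x => Iff.trans ?_ (e.forall_congr_right (q := fun κ => 0 ≤ g κ x)).symm⟩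
  have hg : (∀ κ, 0 ≤ g κ x) ↔ (∀ i, f i w = 0 → 0 ≤ f i x) ∧
      ∀ i j, 0 < f i w → f j w < 0 → 0 ≤ f i w * f j x - f j w * f i x := by
    simp only [g, Sum.forall, Sum.elim_inl, Sum.elim_inr, Prod.forall]
    refine and_congr (forall_congr' fun i => ?_) (forall_congr' fun i => forall_congr' fun j => ?_)
    all_goals split_ifs <;> simp_all
  simpa only [map_add, map_smul, smul_eq_mul, hg] using
    exists_forall_add_mul_nonneg_iff (fun i => f i w) fun i => f i x

/-- The number of inequalities that Fourier–Motzkin elimination of `d` variables from `m`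
inequalities leaves: eliminating one variable keeps at most `m` of them and combines at most
`m * m` pairs. -/
def eliminationCount : ℕ → ℕ → ℕ
  | 0, m => m
  | d + 1, m => eliminationCount d (m + m * m)

lemma exists_dual_forall_nonneg_add_mem_span_iff {d m : ℕ} (w : Fin d → E)
    (f : Fin m → Module.Dual 𝕜 E) : ∃ g : Fin (eliminationCount d m) → Module.Dual 𝕜 E,
      ∀ x, (∃ y ∈ Submodule.span 𝕜 (Set.range w), ∀ i, 0 ≤ f i (x + y)) ↔ ∀ κ, 0 ≤ g κ x := by
  induction d generalizing m with
  | zero => exact ⟨f, by simp [eliminationCount]⟩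
  | succ d ih =>
    obtain ⟨f', hf'⟩ := exists_dual_forall_nonneg_add_smul_iff f (w 0)
    obtain ⟨g, hg⟩ := ih (Fin.tail w) f'
    refine ⟨g, fun x => Iff.trans ?_ (hg x)⟩
    rw [← Fin.cons_self_tail w, Fin.range_cons]
    simp only [Submodule.mem_span_insert, ← hf', Fin.tail_cons]
    constructor
    · rintro ⟨_, ⟨t, y, hy, rfl⟩, hx⟩
      exact ⟨y, hy, t, by simpa only [add_assoc, add_comm y] using hx⟩
    · rintro ⟨y, hy, t, hx⟩
      exact ⟨_, ⟨t, y, hy, rfl⟩, by simpa only [add_assoc, add_comm y] using hx⟩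

/-- The possible values of the left-hand sides form a subspace of `Fin k → 𝕜`, so it is enough to
eliminate `k` variables there, whatever the dimension of `E`. -/
theorem exists_dual_nonempty_iff {k : ℕ} (f : Fin k → Module.Dual 𝕜 E) :
    ∃ g : Fin (eliminationCount k k) → Module.Dual 𝕜 (Fin k → 𝕜),
      ∀ b, {x | ∀ i, f i x ≤ b i}.Nonempty ↔ ∀ κ, 0 ≤ g κ b := by
  obtain ⟨w, hw⟩ :=
    exists_span_range_eq (Pi.basisFun 𝕜 (Fin k)) (LinearMap.range (LinearMap.pi f))
  obtain ⟨g, hg⟩ := exists_dual_forall_nonneg_add_mem_span_iff w fun i => LinearMap.proj i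
  refine ⟨g, fun b => ?_⟩
  rw [← hg, hw]
  constructor
  · rintro ⟨x, hx⟩
    exact ⟨_, ⟨-x, rfl⟩, fun i => by simpa using hx i⟩
  · rintro ⟨_, ⟨x, rfl⟩, hx⟩
    exact ⟨-x, fun i => by simpa [neg_le_iff_add_nonneg] using hx i⟩

end FourierMotzkin

lemma exists_forall_le_iff_lt {U α : Type*} [LinearOrder α] [NoMinOrder α] (X : Finset U)
    (f : U → α) (a : α) : ∃ y, ∀ u ∈ X, f u ≤ y ↔ f u < a := by
  classical
  obtain ⟨b, hb⟩ := exists_lt a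
  obtain ⟨y, hy, hmax⟩ :=
    (insert b {x ∈ X.image f | x < a}).exists_max_image id (insert_nonempty _ _)
  have hya : y < a := by
    rcases mem_insert.1 hy with rfl | hy
    exacts [hb, (mem_filter.1 hy).2]
  exact ⟨y, fun u hu => ⟨fun h => h.trans_lt hya, fun h =>
    hmax _ (mem_insert_of_mem (mem_filter.2 ⟨mem_image_of_mem f hu, h⟩))⟩⟩

section Chambers

variable {𝕜 V : Type*} [Field 𝕜] [LinearOrder 𝕜] [IsStrictOrderedRing 𝕜]

/-- Where `c u < c v` exactly on `S`, the function `c u ⊓ c v` is the sum of its part on `S`, which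
depends on `u` only, and its part off `S`, which depends on `v` only. -/
lemma HasCover.sign_pattern_and_forall_nonneg_inf {k N K : ℕ} {X Y : Finset V}
    (hX : #X ≤ 2 ^ K) (hY : #Y ≤ 2 ^ K) (c : V → Fin k → 𝕜)
    (g : Fin N → Module.Dual 𝕜 (Fin k → 𝕜)) (S : Finset (Fin k)) :
    HasCover (fun u v => (∀ i, c u i < c v i ↔ i ∈ S) ∧ ∀ κ, 0 ≤ g κ (c u ⊓ c v)) X Y
      (linearCost k (k + N) * (K + 1) ^ k) := by
  classical
  choose y hy using fun i v => exists_forall_le_iff_lt X (fun u => c u i) (c v i)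
  let e : Fin k → 𝕜 := fun i => if i ∈ S then 1 else 0
  let φ : Fin k ⊕ Fin N → Module.Dual 𝕜 (Fin k → 𝕜) :=
    Sum.elim (fun i => if i ∈ S then LinearMap.proj i else -LinearMap.proj i)
      fun κ => -(g κ ∘ₗ LinearMap.mulLeft 𝕜 e)
  let y' : Fin k ⊕ Fin N → V → 𝕜 :=
    Sum.elim (fun i v => if i ∈ S then y i v else -c v i) fun κ v => g κ ((1 - e) * c v)
  refine ((forall_dual_le hX hY c φ y').congr fun u hu v _ => ?_).mono (by simp)
  rw [Sum.forall]
  have hsign (i) : φ (.inl i) (c u) ≤ y' (.inl i) v ↔ (c u i < c v i ↔ i ∈ S) := by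
    by_cases hi : i ∈ S <;> simp [φ, y', hi, hy i v u hu]
  simp only [hsign]
  refine and_congr_right fun hS => forall_congr' fun κ => ?_
  have hinf : c u ⊓ c v = e * c u + (1 - e) * c v := by
    ext i
    by_cases hi : i ∈ S
    · simp [e, hi, ((hS i).2 hi).le]
    · simp [e, hi, not_lt.1 (mt (hS i).1 hi)]
  simp only [hinf, map_add, φ, y', Sum.elim_inr, LinearMap.neg_apply, LinearMap.comp_apply,
    LinearMap.mulLeft_apply, neg_le_iff_add_nonneg']

lemma HasCover.exists_lt_and_forall_nonneg_inf {k N K : ℕ} {X Y : Finset V}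
    (hX : #X ≤ 2 ^ K) (hY : #Y ≤ 2 ^ K) (c : V → Fin k → 𝕜)
    (g : Fin N → Module.Dual 𝕜 (Fin k → 𝕜)) :
    HasCover (fun u v => (∃ i, c u i < c v i) ∧ ∀ κ, 0 ≤ g κ (c u ⊓ c v)) X Y
      (2 ^ k * (linearCost k (k + N) * (K + 1) ^ k)) := by
  classical
  refine ((exists_index (κ := {S : Finset (Fin k) // S.Nonempty}) fun S =>
    sign_pattern_and_forall_nonneg_inf hX hY c g S.1).congr fun u _ v _ => ?_).mono
      (Nat.mul_le_mul_right _ ((Fintype.card_subtype_le _).trans (by simp)))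
  constructor
  · rintro ⟨⟨i, hi⟩, hg⟩
    exact ⟨⟨univ.filter fun i => c u i < c v i, i, by simpa using hi⟩, by simp, hg⟩
  · rintro ⟨⟨S, i, hi⟩, hS, hg⟩
    exact ⟨⟨i, (hS i).2 hi⟩, hg⟩

end Chambers

lemma HasCover.exists_isBicliqueCover {V : Type*} [Fintype V] {G : SimpleGraph V}
    {R : V → V → Prop} {t : ℕ} (h : HasCover R univ univ t)
    (hG : ∀ u v, G.Adj u v ↔ R u v ∨ R v u) :
    ∃ (m : ℕ) (A B : Fin m → Finset V),
      IsBicliqueCover G A B ∧ coverSize A B ≤ 2 * t * Fintype.card V := by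
  obtain ⟨m, A, B, -, hR, hsize⟩ := h
  simp only [mem_univ, true_imp_iff] at hR
  have hadj (i) : ∀ u ∈ A i, ∀ v ∈ B i, G.Adj u v := fun u hu v hv =>
    (hG u v).2 (.inl ((hR u v).2 ⟨i, hu, hv⟩))
  refine ⟨m, A, B, ⟨fun i => disjoint_left.2 fun u hu hu' => G.irrefl (hadj i u hu u hu'), hadj,
    fun u v huv => ?_⟩, hsize.trans (by rw [card_univ]; ring_nf; rfl)⟩
  simpa only [hR, ← exists_or] using (hG u v).1 huv

lemma clog_add_one_le_three_mul_logb {n : ℕ} (hn : 2 ≤ n) :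
    (Nat.clog 2 n + 1 : ℝ) ≤ 3 * Real.logb 2 n := by
  have hlog : 1 ≤ Real.logb 2 n := by
    rw [Real.le_logb_iff_rpow_le one_lt_two (by positivity), Real.rpow_one]
    exact_mod_cast hn
  have hclog : (Nat.clog 2 n : ℝ) < Real.logb 2 n + 1 := by
    rw [← Real.natCeil_logb_natCast]
    exact Nat.ceil_lt_add_one (by exact_mod_cast zero_le_one.trans hlog)
  linarith

section Polytopes

variable {𝕜 E V : Type*} [Field 𝕜] [LinearOrder 𝕜] [IsStrictOrderedRing 𝕜] [AddCommGroup E]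
  [Module 𝕜 E]

/-- The constant in the rate of the covers of intersection graphs of intersections of `k`
halfspaces. -/
def polytopeCost (k : ℕ) : ℕ :=
  1 + 2 ^ k * linearCost k (k + eliminationCount k k)

theorem exists_isBicliqueCover_of_adj_iff {k K : ℕ} (hk : 1 ≤ k) [Fintype V]
    (hK : Fintype.card V ≤ 2 ^ K) (f : Fin k → Module.Dual 𝕜 E) (c : V → Fin k → 𝕜)
    (G : SimpleGraph V) (hG : ∀ u v, G.Adj u v ↔ u ≠ v ∧
      ({x | ∀ i, f i x ≤ c u i} ∩ {x | ∀ i, f i x ≤ c v i}).Nonempty) :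
    ∃ (m : ℕ) (A B : Fin m → Finset V), IsBicliqueCover G A B ∧
      coverSize A B ≤ 2 * (polytopeCost k * (K + 1) ^ k) * Fintype.card V := by
  obtain ⟨g, hg⟩ := exists_dual_nonempty_iff f
  have hcard (X : Finset V) : #X ≤ 2 ^ K := (card_le_univ X).trans hK
  have htwins : HasCover (fun u v => (∀ κ, 0 ≤ g κ (c v)) ∧ u ≠ v ∧ c u = c v) univ univ (1 * K) :=
    (HasCover.of_right fun v => ∀ κ, 0 ≤ g κ (c v)).and_of_complete
      fun A _ B _ _ => HasCover.of_ne_and_eq hK c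
  have hrate : 1 * K ≤ 1 * (K + 1) ^ k :=
    Nat.mul_le_mul_left 1 (K.le_succ.trans (Nat.le_self_pow (by omega) _))
  refine ((htwins.or (HasCover.exists_lt_and_forall_nonneg_inf (hcard _) (hcard _) c g)).mono
    (by rw [polytopeCost]; linarith)).exists_isBicliqueCover fun u v => ?_
  have hmeet : ({x | ∀ i, f i x ≤ c u i} ∩ {x | ∀ i, f i x ≤ c v i}).Nonempty ↔
      ∀ κ, 0 ≤ g κ (c u ⊓ c v) := by
    simp only [← hg, Pi.inf_apply, le_inf_iff, forall_and, Set.inter_def, Set.mem_ofPred_eq]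
  rw [hG, hmeet]
  by_cases huv : c u = c v
  · simp only [huv, inf_idem, lt_irrefl, exists_false, false_and, or_false, and_true,
      ne_comm (a := v), or_self]
    exact and_comm
  · obtain ⟨i, hi⟩ := Function.ne_iff.1 huv
    have hlt : (∃ i, c u i < c v i) ∨ ∃ i, c v i < c u i :=
      (lt_or_gt_of_ne hi).imp (fun h => ⟨i, h⟩) fun h => ⟨i, h⟩
    have hne : u ≠ v := fun h => huv (congrArg c h)
    simp only [huv, Ne.symm huv, hne, hlt, and_false, false_or, inf_comm (c v), ← or_and_right,
      ne_eq, not_false_eq_true, true_and]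

end Polytopes

theorem stmt_17_general (k : ℕ) (hk : 1 ≤ k) :
    ∃ C : ℝ, 0 < C ∧ ∀ (𝕜 E V : Type*) [Field 𝕜] [LinearOrder 𝕜] [IsStrictOrderedRing 𝕜]
      [AddCommGroup E] [Module 𝕜 E] [Fintype V], 2 ≤ Fintype.card V →
      ∀ (f : Fin k → Module.Dual 𝕜 E) (c : V → Fin k → 𝕜) (G : SimpleGraph V),
      (∀ u v, G.Adj u v ↔ u ≠ v ∧
        ({x | ∀ i, f i x ≤ c u i} ∩ {x | ∀ i, f i x ≤ c v i}).Nonempty) →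
      ∃ (m : ℕ) (A B : Fin m → Finset V), IsBicliqueCover G A B ∧
        (coverSize A B : ℝ) ≤ C * Fintype.card V * Real.logb 2 (Fintype.card V) ^ k := by
  refine ⟨2 * polytopeCost k * 3 ^ k, by simp only [polytopeCost]; positivity, ?_⟩
  intro 𝕜 E V _ _ _ _ _ _ hV f c G hG
  set n := Fintype.card V
  obtain ⟨m, A, B, hAB, hsize⟩ :=
    exists_isBicliqueCover_of_adj_iff hk (Nat.le_pow_clog one_lt_two n) f c G hG
  refine ⟨m, A, B, hAB, ?_⟩
  calc (coverSize A B : ℝ) ≤ 2 * (polytopeCost k * (Nat.clog 2 n + 1) ^ k) * n := by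
        exact_mod_cast hsize
    _ ≤ 2 * (polytopeCost k * (3 * Real.logb 2 n) ^ k) * n := by
        gcongr
        exact clog_add_one_le_three_mul_logb hV
    _ = 2 * polytopeCost k * 3 ^ k * n * Real.logb 2 n ^ k := by ring

/-- Intersection graphs of polytopes cut out by translates of `k` fixed
halfspaces admit biclique covers of size `O(n (log₂ n)^k)`, with a constant
depending only on `k`. -/
theorem stmt_17 (k : ℕ) (hk : 1 ≤ k) :
    ∃ C : ℝ, 0 < C ∧ ∀ n : ℕ, 2 ≤ n → ∀ d : ℕ,
      ∀ (a : Fin k → Fin d → ℝ) (c : Fin n → Fin k → ℝ),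
      (∀ v : Fin n, {x : Fin d → ℝ | ∀ i, ∑ j, a i j * x j ≤ c v i}.Nonempty) →
      ∀ G : SimpleGraph (Fin n),
      (∀ u v, G.Adj u v ↔ u ≠ v ∧
        ({x : Fin d → ℝ | ∀ i, ∑ j, a i j * x j ≤ c u i} ∩
          {x : Fin d → ℝ | ∀ i, ∑ j, a i j * x j ≤ c v i}).Nonempty) →
      ∃ (m : ℕ) (A B : Fin m → Finset (Fin n)),
        IsBicliqueCover G A B ∧
        (coverSize A B : ℝ) ≤ C * (n : ℝ) * (Real.logb 2 n) ^ k := by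
  obtain ⟨C, hC, hcover⟩ := stmt_17_general k hk
  refine ⟨C, hC, fun n hn d a c _ G hG => ?_⟩
  simpa using hcover ℝ (Fin d → ℝ) (Fin n) (by simpa) (fun i => dotProductBilin ℝ ℝ (a i)) c G hG
end

section
/- There exists a constant c > 0 such that for every n₀ there exist an integer n ≥ n₀, a set P of n points in ℝ², and a family H of n closed lower halfplanes (each of the form {(x, y) ∈ ℝ² : y ≤ m·x + q} for some m, q ∈ ℝ) such that every biclique cover of the incidence graph I(P, H) has size at least c · n^{4/3}. -/
/-!
Only the incidences in which a point lies *on* the boundary line of its halfplane are counted.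

In a biclique with point side `S` and halfplane side `T`, every point of `S` lies weakly below every
boundary line of `T`. If a point of `S` on a line `l` of `T` has further points of `S` on `l` on
both sides, then it lies on no other line of `T`, since a different line through it would pass
strictly below one of its two neighbours. All but two points of `S` on each line are of this kind,
so there are at most `|S| + 2|T|` boundary incidences in the biclique, and the size of a biclique
cover is at least half the number of all boundary incidences.

The points `(x, y)` and the lines `y = m x + q` with `x, m < k` and `y, q < 2k²` form configurations
of size `n = 2k³`, and every line with `q < k²` passes through `k` of the points. This makes
`k⁴`, hence of order `n^{4/3}`, incidences.
-/

open Finset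

section Interior

variable {α β : Type*} [LinearOrder β]

/-- The elements of `s` at which `f` is neither minimal nor maximal on `s`. -/
def interiorBy (f : α → β) (s : Finset α) : Finset α :=
  {x ∈ s | (∃ u ∈ s, f u < f x) ∧ ∃ v ∈ s, f x < f v}

lemma mem_interiorBy {f : α → β} {s : Finset α} {x : α} :
    x ∈ interiorBy f s ↔ x ∈ s ∧ (∃ u ∈ s, f u < f x) ∧ ∃ v ∈ s, f x < f v :=
  mem_filter

lemma card_le_card_interiorBy_add_two {f : α → β} {s : Finset α} (hf : Set.InjOn f s) :
    #s ≤ #(interiorBy f s) + 2 := by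
  classical
  obtain rfl | hs := s.eq_empty_or_nonempty
  · simp
  obtain ⟨lo, hlo, lo_le⟩ := s.exists_min_image f hs
  obtain ⟨hi, hhi, le_hi⟩ := s.exists_max_image f hs
  have cover : s ⊆ insert lo (insert hi (interiorBy f s)) := by
    intro x hx
    by_cases hxlo : x = lo
    · exact mem_insert.2 (.inl hxlo)
    by_cases hxhi : x = hi
    · exact mem_insert_of_mem (mem_insert.2 (.inl hxhi))
    refine mem_insert_of_mem (mem_insert_of_mem (mem_interiorBy.2 ⟨hx, ⟨lo, hlo, ?_⟩, hi, hhi, ?_⟩))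
    · exact (lo_le x hx).lt_of_ne fun h => hxlo (hf hx hlo h.symm)
    · exact (le_hi x hx).lt_of_ne fun h => hxhi (hf hx hhi h)
  calc #s ≤ #(insert lo (insert hi (interiorBy f s))) := card_le_card cover
    _ ≤ #(insert hi (interiorBy f s)) + 1 := card_insert_le _ _
    _ ≤ #(interiorBy f s) + 2 := Nat.succ_le_succ (card_insert_le _ _)

end Interior

section Lines

/-- The point `p` lies on the line with slope `l.1` and intercept `l.2`. -/
def OnLine {R : Type*} [Semiring R] (p l : R × R) : Prop := p.2 = l.1 * p.1 + l.2

instance {R : Type*} [Semiring R] [DecidableEq R] : DecidableRel (OnLine (R := R)) :=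
  fun p l => inferInstanceAs (Decidable (p.2 = l.1 * p.1 + l.2))

lemma OnLine.eq_of_fst_eq {R : Type*} [Semiring R] {p p' l : R × R} (h : OnLine p l)
    (h' : OnLine p' l) (hx : p.1 = p'.1) : p = p' :=
  Prod.ext hx (by rw [h, h', hx])

variable {R : Type*} [CommRing R] [LinearOrder R]

/-- The points of the family `P` with index in `S` that lie on the line `l`, as a set of indices. -/
def pointsOn {ι : Type*} (P : ι → R × R) (S : Finset ι) (l : R × R) : Finset ι :=
  {i ∈ S | OnLine (P i) l}

/-- The points of `P` on the line `l` that lie strictly between two other such points. -/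
def flankedOn {ι : Type*} (P : ι → R × R) (S : Finset ι) (l : R × R) : Finset ι :=
  interiorBy (fun i => (P i).1) (pointsOn P S l)

variable {ι κ : Type*} {P : ι → R × R} {L : κ → R × R}

lemma card_pointsOn_le (hP : Function.Injective P) (S : Finset ι) (l : R × R) :
    #(pointsOn P S l) ≤ #(flankedOn P S l) + 2 :=
  card_le_card_interiorBy_add_two fun _ hi _ hj hx =>
    hP (OnLine.eq_of_fst_eq (mem_filter.1 hi).2 (mem_filter.1 hj).2 hx)

variable [IsStrictOrderedRing R]

lemma OnLine.eq_of_flanked {p u v l l' : R × R} (hp : OnLine p l) (hp' : OnLine p l')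
    (hu : OnLine u l) (hv : OnLine v l) (hup : u.1 < p.1) (hpv : p.1 < v.1)
    (hu' : u.2 ≤ l'.1 * u.1 + l'.2) (hv' : v.2 ≤ l'.1 * v.1 + l'.2) : l = l' := by
  rw [OnLine] at hp hp' hu hv
  have slope_le : l.1 ≤ l'.1 :=
    le_of_mul_le_mul_right (a := v.1 - p.1) (by linarith) (sub_pos.2 hpv)
  have le_slope : l'.1 ≤ l.1 :=
    le_of_mul_le_mul_right (a := p.1 - u.1) (by linarith) (sub_pos.2 hup)
  have slope_eq : l.1 = l'.1 := slope_le.antisymm le_slope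
  refine Prod.ext slope_eq ?_
  rw [slope_eq] at hp
  linarith

lemma pairwiseDisjoint_flankedOn (hL : Function.Injective L) {S : Finset ι} {T : Finset κ}
    (hST : ∀ i ∈ S, ∀ j ∈ T, (P i).2 ≤ (L j).1 * (P i).1 + (L j).2) :
    (T : Set κ).PairwiseDisjoint fun j => flankedOn P S (L j) := by
  intro j _ j' hj' hne
  refine disjoint_left.2 fun i hi hi' => hne (hL ?_)
  obtain ⟨hij, ⟨u, hu, hui⟩, v, hv, hiv⟩ := mem_interiorBy.1 hi
  obtain ⟨-, hij⟩ := mem_filter.1 hij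
  obtain ⟨-, hij'⟩ := mem_filter.1 (mem_interiorBy.1 hi').1
  obtain ⟨huS, huj⟩ := mem_filter.1 hu
  obtain ⟨hvS, hvj⟩ := mem_filter.1 hv
  exact hij.eq_of_flanked hij' huj hvj hui hiv (hST u huS j' hj') (hST v hvS j' hj')

lemma sum_card_flankedOn_le (hL : Function.Injective L) {S : Finset ι} {T : Finset κ}
    (hST : ∀ i ∈ S, ∀ j ∈ T, (P i).2 ≤ (L j).1 * (P i).1 + (L j).2) :
    ∑ j ∈ T, #(flankedOn P S (L j)) ≤ #S := by
  classical
  rw [← card_biUnion (pairwiseDisjoint_flankedOn hL hST)]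
  exact card_le_card (biUnion_subset.2 fun j _ =>
    (filter_subset _ _).trans (filter_subset _ _))

lemma card_interedges_onLine_le (hP : Function.Injective P) (hL : Function.Injective L)
    {S : Finset ι} {T : Finset κ}
    (hST : ∀ i ∈ S, ∀ j ∈ T, (P i).2 ≤ (L j).1 * (P i).1 + (L j).2) :
    #(Rel.interedges (fun i j => OnLine (P i) (L j)) S T) ≤ #S + 2 * #T :=
  calc #(Rel.interedges (fun i j => OnLine (P i) (L j)) S T)
      = ∑ j ∈ T, #(pointsOn P S (L j)) := by
        simp only [Rel.interedges, pointsOn, card_filter, sum_product_right]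
    _ ≤ ∑ j ∈ T, (#(flankedOn P S (L j)) + 2) :=
        sum_le_sum fun j _ => card_pointsOn_le hP S (L j)
    _ = ∑ j ∈ T, #(flankedOn P S (L j)) + 2 * #T := by
        rw [sum_add_distrib, sum_const, smul_eq_mul, mul_comm]
    _ ≤ #S + 2 * #T := by gcongr; exact sum_card_flankedOn_le hL hST

end Lines

section BicliqueCover

variable {ι κ : Type*} {G : SimpleGraph (ι ⊕ κ)} {r : ι → κ → Prop} [DecidableRel r]

lemma card_interedges_biclique_le {c : ℕ}
    (hc : ∀ (S : Finset ι) (T : Finset κ), (∀ i ∈ S, ∀ j ∈ T, G.Adj (.inl i) (.inr j)) →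
      #(Rel.interedges r S T) ≤ c * (#S + #T))
    {A B : Finset (ι ⊕ κ)} (hAB : ∀ a ∈ A, ∀ b ∈ B, G.Adj a b) :
    #(Rel.interedges r A.toLeft B.toRight) + #(Rel.interedges r B.toLeft A.toRight) ≤
      c * (#A + #B) := by
  have left_right := hc A.toLeft B.toRight fun i hi j hj =>
    hAB _ (mem_toLeft.1 hi) _ (mem_toRight.1 hj)
  have right_left := hc B.toLeft A.toRight fun i hi j hj =>
    (hAB _ (mem_toRight.1 hj) _ (mem_toLeft.1 hi)).symm
  rw [← A.card_toLeft_add_card_toRight, ← B.card_toLeft_add_card_toRight]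
  linarith

lemma card_interedges_le_mul_coverSize [Fintype ι] [Fintype κ]
    (hr : ∀ i j, r i j → G.Adj (.inl i) (.inr j)) {c : ℕ}
    (hc : ∀ (S : Finset ι) (T : Finset κ), (∀ i ∈ S, ∀ j ∈ T, G.Adj (.inl i) (.inr j)) →
      #(Rel.interedges r S T) ≤ c * (#S + #T))
    {m : ℕ} {A B : Fin m → Finset (ι ⊕ κ)} (hAB : IsBicliqueCover G A B) :
    #(Rel.interedges r univ univ) ≤ c * coverSize A B := by
  classical
  obtain ⟨-, biclique, cover⟩ := hAB
  let covered (t : Fin m) : Finset (ι × κ) :=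
    Rel.interedges r (A t).toLeft (B t).toRight ∪ Rel.interedges r (B t).toLeft (A t).toRight
  have subset_covered : Rel.interedges r univ univ ⊆ univ.biUnion covered := by
    rintro ⟨i, j⟩ hij
    obtain ⟨-, -, hij⟩ := Rel.mem_interedges_iff.1 hij
    obtain ⟨t, ht⟩ := cover _ _ (hr i j hij)
    simp only [covered, mem_biUnion, mem_univ, true_and, mem_union, Rel.mk_mem_interedges_iff,
      mem_toLeft, mem_toRight]
    exact ⟨t, ht.imp (fun ⟨hi, hj⟩ => ⟨hi, hj, hij⟩) fun ⟨hj, hi⟩ => ⟨hi, hj, hij⟩⟩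
  calc #(Rel.interedges r univ univ)
      ≤ #(univ.biUnion covered) := card_le_card subset_covered
    _ ≤ ∑ t, #(covered t) := card_biUnion_le
    _ ≤ ∑ t, c * (#(A t) + #(B t)) := sum_le_sum fun t _ =>
        (card_union_le _ _).trans (card_interedges_biclique_le hc (biclique t))
    _ = c * coverSize A B := by rw [coverSize, mul_sum]

lemma card_interedges_onLine_le_two_mul_coverSize {R : Type*} [CommRing R] [LinearOrder R]
    [IsStrictOrderedRing R] [Fintype ι] [Fintype κ] {P : ι → R × R} {L : κ → R × R}
    (hP : Function.Injective P) (hL : Function.Injective L)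
    (hG : ∀ i j, G.Adj (.inl i) (.inr j) ↔ (P i).2 ≤ (L j).1 * (P i).1 + (L j).2)
    {m : ℕ} {A B : Fin m → Finset (ι ⊕ κ)} (hAB : IsBicliqueCover G A B) :
    #(Rel.interedges (fun i j => OnLine (P i) (L j)) univ univ) ≤ 2 * coverSize A B := by
  refine card_interedges_le_mul_coverSize (fun i j hij => (hG i j).2 hij.le) ?_ hAB
  intro S T hST
  have := card_interedges_onLine_le hP hL fun i hi j hj => (hG i j).1 (hST i hi j hj)
  omega

end BicliqueCover

section Grid

variable (R : Type*) [Semiring R]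

/-- The integer grid `[0, a) × [0, b)`, enumerated by `Fin (a * b)`. It serves both as a set of
points and, read as pairs (slope, intercept), as a set of lines. -/
def grid (a b : ℕ) (i : Fin (a * b)) : R × R :=
  (((finProdFinEquiv.symm i).1 : ℕ), ((finProdFinEquiv.symm i).2 : ℕ))

lemma grid_injective [CharZero R] (a b : ℕ) : Function.Injective (grid R a b) := by
  intro i j h
  simp only [grid, Prod.mk.injEq, Nat.cast_inj] at h
  exact finProdFinEquiv.symm.injective (Prod.ext (Fin.ext h.1) (Fin.ext h.2))

lemma mul_add_lt_of_sq_add_le {a b d : ℕ} (h : a ^ 2 + d ≤ b) (m x : Fin a) (q : Fin d) :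
    (m : ℕ) * x + q < b :=
  calc (m : ℕ) * x + q < a * a + d :=
        add_lt_add_of_le_of_lt (Nat.mul_le_mul m.2.le x.2.le) q.2
    _ ≤ b := by rwa [← sq]

lemma sq_mul_le_card_interedges_grid [DecidableEq R] {a b d : ℕ} (h : a ^ 2 + d ≤ b) :
    a ^ 2 * d ≤ #(Rel.interedges (fun i j => OnLine (grid R a b i) (grid R a b j)) univ univ) := by
  let incidence : Fin a × Fin a × Fin d → Fin (a * b) × Fin (a * b) := fun ⟨x, m, q⟩ =>
    (finProdFinEquiv (x, ⟨m * x + q, mul_add_lt_of_sq_add_le h m x q⟩),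
      finProdFinEquiv (m, q.castLE (le_of_add_le_right h)))
  have incidence_injective : Function.Injective incidence := by
    rintro ⟨x, m, q⟩ ⟨x', m', q'⟩ heq
    simp only [incidence, Prod.mk.injEq, EmbeddingLike.apply_eq_iff_eq, Fin.castLE_inj] at heq
    simp only [heq]
  have onLine_incidence (w : Fin a × Fin a × Fin d) :
      OnLine (grid R a b (incidence w).1) (grid R a b (incidence w).2) := by
    simp [incidence, OnLine, grid]
  calc a ^ 2 * d = #(univ : Finset (Fin a × Fin a × Fin d)) := by
        simp only [card_univ, Fintype.card_prod, Fintype.card_fin]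
        ring
    _ ≤ _ := card_le_card_of_injOn incidence
        (fun w _ => Rel.mem_interedges_iff.2 ⟨mem_univ _, mem_univ _, onLine_incidence w⟩)
        incidence_injective.injOn

end Grid

lemma rpow_div_le_pow {x y : ℝ} (hx : 0 ≤ x) (hy : 0 ≤ y) (m : ℕ) {n : ℕ} (hn : n ≠ 0)
    (h : x ≤ y ^ n) : x ^ ((m : ℝ) / n) ≤ y ^ m :=
  calc x ^ ((m : ℝ) / n) ≤ (y ^ n) ^ ((m : ℝ) / n) := by gcongr
    _ = y ^ m := by
      rw [← Real.rpow_natCast_mul hy, mul_div_cancel₀ _ (Nat.cast_ne_zero.2 hn), Real.rpow_natCast]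

theorem stmt_18_general (R : Type*) [CommRing R] [LinearOrder R] [IsStrictOrderedRing R] :
    ∃ c : ℝ, 0 < c ∧ ∀ n₀ : ℕ, ∃ n : ℕ, n₀ ≤ n ∧
      ∃ (P : Fin n → R × R) (mq : Fin n → R × R),
        Function.Injective P ∧ Function.Injective mq ∧
        ∀ G : SimpleGraph (Fin n ⊕ Fin n),
          (∀ i j, G.Adj (.inl i) (.inr j) ↔
            (P i).2 ≤ (mq j).1 * (P i).1 + (mq j).2) →
          ∀ (m : ℕ) (A B : Fin m → Finset (Fin n ⊕ Fin n)),
            IsBicliqueCover G A B →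
            c * (n : ℝ) ^ ((4 : ℝ) / 3) ≤ (coverSize A B : ℝ) := by
  refine ⟨1 / 32, by norm_num, fun k => ⟨k * (2 * k ^ 2), ?_, grid R k (2 * k ^ 2),
    grid R k (2 * k ^ 2), grid_injective R _ _, grid_injective R _ _, ?_⟩⟩
  · nlinarith [Nat.le_self_pow three_ne_zero k]
  intro G hG m A B hAB
  have incidences_le : k ^ 2 * k ^ 2 ≤ 2 * coverSize A B :=
    (sq_mul_le_card_interedges_grid R (two_mul (k ^ 2)).ge).trans
      (card_interedges_onLine_le_two_mul_coverSize (grid_injective R _ _) (grid_injective R _ _)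
        hG hAB)
  -- This crude bound avoids a cube root of `2`.
  have size_le_cube : k * (2 * k ^ 2) ≤ (2 * k) ^ 3 := by nlinarith [Nat.zero_le (k ^ 3)]
  have rpow_le : ((k * (2 * k ^ 2) : ℕ) : ℝ) ^ ((4 : ℝ) / 3) ≤ (2 * k : ℝ) ^ 4 := by
    simpa only [Nat.cast_ofNat] using
      rpow_div_le_pow (by positivity) (by positivity) 4 three_ne_zero (mod_cast size_le_cube)
  have : (k : ℝ) ^ 2 * k ^ 2 ≤ 2 * coverSize A B := mod_cast incidences_le
  linarith

/-- There exist incidence graphs of `n` points and `n` closed lower halfplanes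
every biclique cover of which has size `Ω(n^{4/3})`. -/
theorem stmt_18 :
    ∃ c : ℝ, 0 < c ∧ ∀ n₀ : ℕ, ∃ n : ℕ, n₀ ≤ n ∧
      ∃ (P : Fin n → ℝ × ℝ) (mq : Fin n → ℝ × ℝ),
        Function.Injective P ∧
        ∀ G : SimpleGraph (Fin n ⊕ Fin n),
          (∀ i j, G.Adj (.inl i) (.inr j) ↔
            (P i).2 ≤ (mq j).1 * (P i).1 + (mq j).2) →
          (∀ i j, ¬ G.Adj (.inl i) (.inl j)) →
          (∀ i j, ¬ G.Adj (.inr i) (.inr j)) →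
          ∀ (m : ℕ) (A B : Fin m → Finset (Fin n ⊕ Fin n)),
            IsBicliqueCover G A B →
            c * (n : ℝ) ^ ((4 : ℝ) / 3) ≤ (coverSize A B : ℝ) :=
  let ⟨c, hc, h⟩ := stmt_18_general ℝ
  ⟨c, hc, fun n₀ => let ⟨n, hn, P, mq, hP, _, hG⟩ := h n₀
    ⟨n, hn, P, mq, hP, fun G hadj _ _ => hG G hadj⟩⟩
end

section
/- There exists a constant c > 0 such that for every n₀ there exist an integer n ≥ n₀ and points p_1, …, p_n ∈ ℝ² such that every biclique cover of the unit disk graph on these points (the graph on vertex set {1, …, n} in which distinct i and j are adjacent if and only if the Euclidean distance between p_i and p_j is at most 2) has size at least c · n^{4/3}. -/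
/-!
Let `I` be the set of incidences between finitely many points and non-vertical lines. There are
unit disks, one for each point and one for each line, such that the disk of a point meets the disk
of a line exactly when the point lies on or below the line: after scaling by a small `ε`, the
circles of radius `2` around the centres of the lines are, to second order, translates of one
parabola, and adding the same quadratic term to all heights turns them into the lines.

Points and lines that form a biclique then carry few incidences: if every point of `S` lies on or
below every line of `T`, then each incidence uses either the flattest line through its point or
the rightmost point on its line, so there are at most `|S| + |T|` of them. As the incidences are
edges, every biclique cover has size at least `|I|`.

Elekes' grid of `2N³` points and `N³` lines has `N⁴` incidences.
-/

open Finset Filter Topology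

section Bicliques

variable {V W P L : Type*} {m : ℕ}

theorem IsBicliqueCover.map {G : SimpleGraph V} {H : SimpleGraph W} {A B : Fin m → Finset V}
    (h : IsBicliqueCover G A B) (e : G ≃g H) :
    IsBicliqueCover H (fun i => (A i).map e.toEquiv.toEmbedding)
      (fun i => (B i).map e.toEquiv.toEmbedding) := by
  obtain ⟨hdisj, hadj, hcover⟩ := h
  refine ⟨fun i => (Finset.disjoint_map _).2 (hdisj i), fun i a ha b hb => ?_, fun u v huv => ?_⟩
  · rw [mem_map_equiv] at ha hb
    exact e.symm.map_adj_iff.1 (hadj i _ ha _ hb)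
  · simp only [mem_map_equiv]
    exact hcover _ _ (e.symm.map_adj_iff.2 huv)

theorem coverSize_map (f : V ↪ W) (A B : Fin m → Finset V) :
    coverSize (fun i => (A i).map f) (fun i => (B i).map f) = coverSize A B := by
  simp only [coverSize, card_map]

theorem IsBicliqueCover.card_le_coverSize {G : SimpleGraph (P ⊕ L)}
    {A B : Fin m → Finset (P ⊕ L)} (h : IsBicliqueCover G A B) {I : Finset (P × L)}
    (hIG : ∀ ⦃p l⦄, (p, l) ∈ I → G.Adj (Sum.inl p) (Sum.inr l))
    (hsparse : ∀ J ⊆ I, ∀ S T, J ⊆ S ×ˢ T →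
      (∀ p ∈ S, ∀ l ∈ T, G.Adj (Sum.inl p) (Sum.inr l)) → #J ≤ #S + #T) :
    #I ≤ coverSize A B := by
  classical
  obtain ⟨-, hadj, hcover⟩ := h
  let covered (C D : Finset (P ⊕ L)) : Finset (P × L) := I ∩ C.toLeft ×ˢ D.toRight
  have card_covered_le {C D : Finset (P ⊕ L)} (hCD : ∀ a ∈ C, ∀ b ∈ D, G.Adj a b) :
      #(covered C D) ≤ #C.toLeft + #D.toRight :=
    hsparse _ inter_subset_left _ _ inter_subset_right fun p hp l hl =>
      hCD _ (mem_toLeft.1 hp) _ (mem_toRight.1 hl)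
  have subset_covered : I ⊆ univ.biUnion fun i => covered (A i) (B i) ∪ covered (B i) (A i) := by
    rintro ⟨p, l⟩ hq
    obtain ⟨i, hi⟩ := hcover _ _ (hIG hq)
    simp only [covered, mem_biUnion, mem_univ, true_and, mem_union, mem_inter, mem_product,
      mem_toLeft, mem_toRight]
    exact ⟨i, hi.imp (fun hi => ⟨hq, hi⟩) fun hi => ⟨hq, hi.symm⟩⟩
  calc #I ≤ ∑ i, #(covered (A i) (B i) ∪ covered (B i) (A i)) :=
        (card_le_card subset_covered).trans card_biUnion_le
    _ ≤ ∑ i, (#(A i) + #(B i)) := by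
        refine sum_le_sum fun i _ => (card_union_le _ _).trans ?_
        have hAB := card_covered_le (hadj i)
        have hBA := card_covered_le fun b hb a ha => (hadj i a ha b hb).symm
        have hA := (A i).card_toLeft_add_card_toRight
        have hB := (B i).card_toLeft_add_card_toRight
        omega

end Bicliques

section Incidences

variable {P L : Type*}

theorem card_le_card_add_card_of_key_le {α β : Type*} [LinearOrder α] [LinearOrder β]
    {I : Finset (P × L)} {S : Finset P} {T : Finset L} (hI : I ⊆ S ×ˢ T) {f : P → α} {g : L → β}
    (hf : ∀ p p' l, (p, l) ∈ I → (p', l) ∈ I → f p = f p' → p = p')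
    (hg : ∀ p l l', (p, l) ∈ I → (p, l') ∈ I → g l = g l' → l = l')
    (hle : ∀ p p' l l', (p, l) ∈ I → (p', l) ∈ I → (p, l') ∈ I → g l' < g l → f p' ≤ f p) :
    #I ≤ #S + #T := by
  classical
  -- A pair `(p, l)` for which `l` is not `g`-least among the partners of `p` is determined by `l`,
  -- since `p` is then `f`-greatest among the partners of `l`.
  let HasLeastKey (q : P × L) : Prop := ∀ l, (q.1, l) ∈ I → g q.2 ≤ g l
  rw [← card_filter_add_card_filter_not (s := I) HasLeastKey]
  refine Nat.add_le_add (card_le_card_of_injOn Prod.fst ?_ ?_)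
    (card_le_card_of_injOn Prod.snd ?_ ?_)
  · exact fun q hq => (mem_product.1 (hI (mem_filter.1 hq).1)).1
  · rintro ⟨p, l⟩ hq ⟨p', l'⟩ hq' (rfl : p = p')
    obtain ⟨hq, h_least⟩ := mem_filter.1 hq
    obtain ⟨hq', h_least'⟩ := mem_filter.1 hq'
    rw [hg p l l' hq hq' (le_antisymm (h_least _ hq') (h_least' _ hq))]
  · exact fun q hq => (mem_product.1 (hI (mem_filter.1 hq).1)).2
  · have key_le {p p' : P} {l : L} (hq : (p, l) ∈ I ∧ ¬ HasLeastKey (p, l)) (hq' : (p', l) ∈ I) :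
        f p' ≤ f p := by
      obtain ⟨hq, hnot⟩ := hq
      simp only [HasLeastKey, not_forall, not_le] at hnot
      obtain ⟨l', hl', hlt⟩ := hnot
      exact hle p p' l l' hq hq' hl' hlt
    rintro ⟨p, l⟩ hq ⟨p', l'⟩ hq' (rfl : l = l')
    rw [mem_coe, mem_filter] at hq hq'
    rw [hf p p' l hq.1 hq'.1 (le_antisymm (key_le hq' hq.1) (key_le hq hq'.1))]

variable {R : Type*}

/-- The height at abscissa `t` of the line `l`, where `(m, k)` encodes the line `y = m t + k`. -/
def lineEval [Semiring R] (l : R × R) (t : R) : R := l.1 * t + l.2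

theorem lineEval_lt_lineEval [CommRing R] [LinearOrder R] [IsStrictOrderedRing R] {l l' : R × R}
    {t t' : R} (hcross : lineEval l t = lineEval l' t) (hslope : l'.1 < l.1) (ht : t < t') :
    lineEval l' t' < lineEval l t' := by
  unfold lineEval at *
  linarith [mul_pos (sub_pos.2 hslope) (sub_pos.2 ht)]

theorem card_le_card_add_card_of_le_lineEval [CommRing R] [LinearOrder R] [IsStrictOrderedRing R]
    {x : P → R × R} (hx : x.Injective) {ℓ : L → R × R} (hℓ : ℓ.Injective)
    {I : Finset (P × L)} {S : Finset P} {T : Finset L} (hI : I ⊆ S ×ˢ T)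
    (hinc : ∀ ⦃p l⦄, (p, l) ∈ I → (x p).2 = lineEval (ℓ l) (x p).1)
    (hbelow : ∀ p ∈ S, ∀ l ∈ T, (x p).2 ≤ lineEval (ℓ l) (x p).1) :
    #I ≤ #S + #T := by
  refine card_le_card_add_card_of_key_le hI (f := fun p => (x p).1) (g := fun l => (ℓ l).1)
    (fun p p' l hp hp' habscissa => hx (Prod.ext habscissa ?_))
    (fun p l l' hl hl' hslope => hℓ (Prod.ext hslope ?_))
    fun p p' l l' hpl hp'l hpl' hslope => ?_
  · rw [hinc hp, hinc hp', habscissa]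
  · have hcross := (hinc hl).symm.trans (hinc hl')
    simpa only [lineEval, hslope, add_right_inj] using hcross
  · by_contra! hlt
    have habove := lineEval_lt_lineEval ((hinc hpl).symm.trans (hinc hpl')) hslope hlt
    rw [← hinc hp'l] at habove
    exact habove.not_ge (hbelow p' (mem_product.1 (hI hp'l)).1 l' (mem_product.1 (hI hpl')).2)

end Incidences

section UnitDisks

/-- The unit disk graph with centres `c i`, defined through distances; in Euclidean space it is the
intersection graph of the closed unit balls around the `c i`. -/
def unitDiskGraph {V X : Type*} [PseudoMetricSpace X] (c : V → X) : SimpleGraph V where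
  Adj i j := i ≠ j ∧ dist (c i) (c j) ≤ 2
  symm := ⟨fun i j h => ⟨h.1.symm, by rw [dist_comm]; exact h.2⟩⟩
  loopless := ⟨fun _ h => h.1 rfl⟩

/-- The centre of the disk representing the point `p`, at scale `ε`. -/
noncomputable def pointCentre (ε : ℝ) (p : ℝ × ℝ) : EuclideanSpace ℝ (Fin 2) :=
  !₂[ε * p.1, ε ^ 2 / 4 * (2 * p.2 - p.1 ^ 2)]

/-- The centre of the disk representing the line `y = m x + k` encoded by `l = (m, k)`, at scale
`ε`. The last summand `ε` puts the points of the line strictly inside the circle of radius `2`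
around the centre when `ε` is small. -/
noncomputable def lineCentre (ε : ℝ) (l : ℝ × ℝ) : EuclideanSpace ℝ (Fin 2) :=
  !₂[ε * l.1, ε ^ 2 / 4 * (l.1 ^ 2 + 2 * l.2 + ε) - 2]

theorem dist_sq_pointCentre_lineCentre (ε : ℝ) (p l : ℝ × ℝ) :
    dist (pointCentre ε p) (lineCentre ε l) ^ 2 =
      4 + ε ^ 2 * (2 * (p.2 - lineEval l p.1) - ε +
        (ε * (2 * p.2 - p.1 ^ 2 - l.1 ^ 2 - 2 * l.2 - ε) / 4) ^ 2) := by
  rw [EuclideanSpace.dist_sq_eq]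
  simp only [pointCentre, lineCentre, lineEval, Fin.sum_univ_two, Real.dist_eq, sq_abs,
    PiLp.toLp_apply, Matrix.cons_val_zero, Matrix.cons_val_one]
  ring

theorem eventually_dist_pointCentre_lineCentre_le_two_iff (p l : ℝ × ℝ) :
    ∀ᶠ ε in 𝓝[>] 0, dist (pointCentre ε p) (lineCentre ε l) ≤ 2 ↔ p.2 ≤ lineEval l p.1 := by
  let F (ε : ℝ) : ℝ := (2 * p.2 - p.1 ^ 2 - l.1 ^ 2 - 2 * l.2 - ε) / 4
  have dist_le_two_iff {ε : ℝ} (hε : 0 < ε) : dist (pointCentre ε p) (lineCentre ε l) ≤ 2 ↔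
      2 * (p.2 - lineEval l p.1) - ε + (ε * F ε) ^ 2 ≤ 0 := by
    rw [← sq_le_sq₀ dist_nonneg zero_le_two, dist_sq_pointCentre_lineCentre, mul_div_assoc,
      (by norm_num : (2 : ℝ) ^ 2 = 4), add_le_iff_nonpos_right, ← smul_eq_mul,
      smul_nonpos_iff_nonpos_of_pos_left (pow_pos hε 2)]
  rcases le_or_gt p.2 (lineEval l p.1) with hbelow | habove
  · have hsmall : ∀ᶠ ε in 𝓝[>] 0, ε * F ε ^ 2 < 1 :=
      nhdsWithin_le_nhds <| ContinuousAt.eventually_lt (by fun_prop) (by fun_prop) (by simp)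
    filter_upwards [hsmall, self_mem_nhdsWithin] with ε hlt (hε : 0 < ε)
    have hneg : ε * (ε * F ε ^ 2 - 1) ≤ 0 :=
      mul_nonpos_of_nonneg_of_nonpos hε.le (by linarith)
    simp only [dist_le_two_iff hε, hbelow, iff_true]
    linarith
  · have hpos : ∀ᶠ ε in 𝓝[>] 0, 0 < 2 * (p.2 - lineEval l p.1) - ε + (ε * F ε) ^ 2 :=
      nhdsWithin_le_nhds <| ContinuousAt.eventually_lt (by fun_prop) (by fun_prop)
        (by simpa using habove)
    filter_upwards [hpos, self_mem_nhdsWithin] with ε hlt (hε : 0 < ε)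
    simp only [dist_le_two_iff hε, hlt.not_ge, habove.not_ge]

variable {P L : Type*}

theorem exists_unitDiskGraph_adj_inl_inr_iff [Finite P] [Finite L]
    (x : P → ℝ × ℝ) (ℓ : L → ℝ × ℝ) :
    ∃ c : P ⊕ L → EuclideanSpace ℝ (Fin 2), ∀ p l,
      (unitDiskGraph c).Adj (Sum.inl p) (Sum.inr l) ↔ (x p).2 ≤ lineEval (ℓ l) (x p).1 := by
  obtain ⟨ε, hε⟩ := (eventually_all.2 fun p => eventually_all.2 fun l =>
    eventually_dist_pointCentre_lineCentre_le_two_iff (x p) (ℓ l)).exists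
  refine ⟨Sum.elim (pointCentre ε ∘ x) (lineCentre ε ∘ ℓ), fun p l => ?_⟩
  simpa [unitDiskGraph] using hε p l

theorem exists_unitDiskGraph_forall_card_le_coverSize [Finite P] [Finite L]
    {x : P → ℝ × ℝ} (hx : x.Injective) {ℓ : L → ℝ × ℝ} (hℓ : ℓ.Injective)
    {I : Finset (P × L)} (hinc : ∀ ⦃p l⦄, (p, l) ∈ I → (x p).2 = lineEval (ℓ l) (x p).1) :
    ∃ c : P ⊕ L → EuclideanSpace ℝ (Fin 2), ∀ {m : ℕ} {A B : Fin m → Finset (P ⊕ L)},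
      IsBicliqueCover (unitDiskGraph c) A B → #I ≤ coverSize A B := by
  obtain ⟨c, hc⟩ := exists_unitDiskGraph_adj_inl_inr_iff x ℓ
  refine ⟨c, fun hAB => hAB.card_le_coverSize (fun p l hpl => (hc p l).2 (hinc hpl).le) ?_⟩
  exact fun J hJ S T hJST hadj => card_le_card_add_card_of_le_lineEval hx hℓ hJST
    (fun p l hpl => hinc (hJ hpl)) fun p hp l hl => (hc p l).1 (hadj p hp l hl)

end UnitDisks

section Grid

/-- The points `(i, j)` with `i < m` and `j < n`; also used for the lines `y = i x + j`. -/
def gridPoint (m n : ℕ) (q : Fin m × Fin n) : ℝ × ℝ := (q.1, q.2)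

theorem gridPoint_injective (m n : ℕ) : (gridPoint m n).Injective := by
  rintro ⟨i, j⟩ ⟨i', j'⟩ h
  simpa [gridPoint, Fin.ext_iff] using h

-- The height `s * w + k` lets each of the `s * k` lines meet the grid in each of the `w` columns.
theorem exists_card_gridPoint_incidences (w s k : ℕ) :
    ∃ I : Finset ((Fin w × Fin (s * w + k)) × (Fin s × Fin k)), #I = w * (s * k) ∧
      ∀ ⦃p l⦄, (p, l) ∈ I →
        (gridPoint w (s * w + k) p).2 =
          lineEval (gridPoint s k l) (gridPoint w (s * w + k) p).1 := by
  have height_lt (a : Fin w) (l : Fin s × Fin k) : (l.1 * a + l.2 : ℕ) < s * w + k :=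
    add_lt_add_of_le_of_lt (Nat.mul_le_mul l.1.is_le' a.is_le') l.2.is_lt
  let meet (q : Fin w × (Fin s × Fin k)) : (Fin w × Fin (s * w + k)) × (Fin s × Fin k) :=
    ((q.1, ⟨_, height_lt q.1 q.2⟩), q.2)
  have meet_injective : meet.Injective := fun q q' h => by
    simp only [meet, Prod.mk.injEq] at h
    exact Prod.ext h.1.1 h.2
  refine ⟨univ.image meet, by simp [card_image_of_injective _ meet_injective], fun p l hpl => ?_⟩
  obtain ⟨⟨a, l'⟩, -, hmeet⟩ := mem_image.1 hpl
  obtain ⟨rfl, rfl⟩ := Prod.ext_iff.1 hmeet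
  simp [meet, gridPoint, lineEval]

end Grid

theorem mul_cube_rpow_four_thirds {a x : ℝ} (ha : 0 ≤ a) (hx : 0 ≤ x) :
    (a * x ^ 3) ^ ((4 : ℝ) / 3) = a ^ ((4 : ℝ) / 3) * x ^ 4 := by
  rw [Real.mul_rpow ha (by positivity), ← Real.rpow_natCast_mul hx]
  norm_num

/-- There exist unit disk graphs on `n` vertices every biclique cover of which
has size `Ω(n^{4/3})`. -/
theorem stmt_19 :
    ∃ c : ℝ, 0 < c ∧ ∀ n₀ : ℕ, ∃ n : ℕ, n₀ ≤ n ∧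
      ∃ p : Fin n → EuclideanSpace ℝ (Fin 2),
        ∀ G : SimpleGraph (Fin n),
          (∀ i j, G.Adj i j ↔ i ≠ j ∧ dist (p i) (p j) ≤ 2) →
          ∀ (m : ℕ) (A B : Fin m → Finset (Fin n)),
            IsBicliqueCover G A B →
            c * (n : ℝ) ^ ((4 : ℝ) / 3) ≤ (coverSize A B : ℝ) := by
  refine ⟨((3 : ℝ) ^ ((4 : ℝ) / 3))⁻¹, by positivity, fun n₀ => ?_⟩
  let N := n₀ + 1
  have hn₀ : n₀ ≤ 3 * N ^ 3 := by
    have := Nat.le_self_pow three_ne_zero N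
    omega
  obtain ⟨I, hcard, hinc⟩ := exists_card_gridPoint_incidences N N (N ^ 2)
  obtain ⟨c, hc⟩ := exists_unitDiskGraph_forall_card_le_coverSize
    (gridPoint_injective _ _) (gridPoint_injective _ _) hinc
  let e : Fin (3 * N ^ 3) ≃ (Fin N × Fin (N * N + N ^ 2)) ⊕ (Fin N × Fin (N ^ 2)) :=
    (Fintype.equivFinOfCardEq (by simp; ring)).symm
  refine ⟨3 * N ^ 3, hn₀, c ∘ e, fun G hG m A B hAB => ?_⟩
  obtain rfl : G = (unitDiskGraph c).comap e := by
    ext i j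
    simp [hG, unitDiskGraph]
  have hsize : N ^ 4 ≤ coverSize A B := by
    have := hc (hAB.map (SimpleGraph.Iso.comap e _))
    rw [coverSize_map, hcard] at this
    linarith
  push_cast
  rw [mul_cube_rpow_four_thirds (by positivity) (by positivity),
    inv_mul_cancel_left₀ (by positivity)]
  exact_mod_cast hsize
end
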